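/- arXiv:0706.1092 — 5 statements merged into one kernel-verified Lean document; each statement's English description precedes it below -/
import Mathlib

section
/- Let P be a polytope in ℝ^k whose vertices lie in ℕ₀^k, and let χ : ℕ₀^k → X be an additive coloring. Then there exist a constant N and a polynomial p such that for all integers n ≥ N, the number of colors |χ(nP ∩ ℤ^k)| appearing on the lattice points of the dilation nP equals p(n). -/
open Pointwise

/-!
Additivity of `χ` says that `χ` factors injectively through a quotient monoid of `ℕ^k`, so colors
can be counted as images under a monoid homomorphism. In a convex combination of the points of `V`
scaled to total weight at least `|V|`, some weight is at least `1`, so a point of `V` can be split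
off; hence the lattice points of `(N + n)P` are those of `NP` plus the `n`-fold sumset `n • V`. It
remains to see, following Khovanskii and Nathanson, that `|B + n • A|` is eventually polynomial for
finite subsets `A`, `B` of a commutative monoid. An element of `B + n • A` has a lexicographically
least representation `b + ∑ mₐ a` with `∑ mₐ = n`, and for fixed `b` the vectors `m` that occur in
least representations form a lower set of `ℕ^A`. By Dickson's lemma such a set is the complement of
a finite union of translated orthants, and the points of degree `n` in a translated orthant are
counted by a binomial coefficient.
-/

open Filter Polynomial
open scoped Finset

universe u

section EventuallyPolynomial

variable {R : Type*}

/-- The functions `ℕ → R` that agree with a polynomial at all large arguments. They are bundled as a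
submodule in order to inherit closure under finite sums and differences. -/
def eventuallyPolynomial (R : Type*) [Semiring R] : Submodule R (ℕ → R) where
  carrier := {f | ∃ p : R[X], ∀ᶠ n : ℕ in atTop, f n = p.eval (n : R)}
  zero_mem' := ⟨0, by simp⟩
  add_mem' := by
    rintro f g ⟨p, hp⟩ ⟨q, hq⟩
    refine ⟨p + q, ?_⟩
    filter_upwards [hp, hq] with n hfn hgn
    simp [hfn, hgn]
  smul_mem' := by
    rintro c f ⟨p, hp⟩
    refine ⟨C c * p, ?_⟩
    filter_upwards [hp] with n hfn
    simp [hfn]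

theorem mem_eventuallyPolynomial_iff [Semiring R] {f : ℕ → R} :
    f ∈ eventuallyPolynomial R ↔ ∃ (N : ℕ) (p : R[X]), ∀ n : ℕ, N ≤ n → f n = p.eval (n : R) := by
  simp only [eventuallyPolynomial, Submodule.mem_mk, AddSubmonoid.mem_mk, AddSubsemigroup.mem_mk,
    Set.mem_ofPred_eq, eventually_atTop]
  exact exists_comm

theorem mem_eventuallyPolynomial_of_comp_add [CommRing R] {f : ℕ → R} (N : ℕ)
    (hf : (fun n ↦ f (N + n)) ∈ eventuallyPolynomial R) : f ∈ eventuallyPolynomial R := by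
  obtain ⟨M, p, hp⟩ := mem_eventuallyPolynomial_iff.1 hf
  refine mem_eventuallyPolynomial_iff.2 ⟨N + M, p.comp (X - C (N : R)), fun n hn ↦ ?_⟩
  obtain ⟨m, rfl⟩ := Nat.exists_eq_add_of_le (le_of_add_le_left hn)
  simp [hp m (by lia)]

end EventuallyPolynomial

section HilbertFunction

variable {σ : Type*} [Fintype σ] [DecidableEq σ] (F : Type*) [Field F] [CharZero F]

theorem card_piAntidiag_univ (n : ℕ) :
    #(Finset.piAntidiag (Finset.univ : Finset σ) n) = (Fintype.card σ).multichoose n := by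
  rw [← Finset.map_sym_eq_piAntidiag, Finset.card_map, Finset.sym_univ, Finset.card_univ,
    Sym.card_sym_eq_multichoose]

variable [DecidableLE (σ → ℕ)]

theorem card_filter_le_piAntidiag_univ (v : σ → ℕ) {n : ℕ} (hn : ∑ j, v j ≤ n) :
    #{m ∈ Finset.piAntidiag Finset.univ n | v ≤ m} =
      (Fintype.card σ).multichoose (n - ∑ j, v j) := by
  rw [← card_piAntidiag_univ]
  refine Finset.card_nbij' (· - v) (· + v) ?_ ?_ ?_ ?_
  · rintro m hm
    obtain ⟨hdeg, hvm⟩ : ∑ j, m j = n ∧ v ≤ m := by simpa using hm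
    simp [Finset.sum_tsub_distrib _ fun j _ ↦ hvm j, hdeg]
  · intro m hm
    have hdeg : ∑ j, m j = n - ∑ j, v j := by simpa using hm
    simp [Finset.sum_add_distrib, hdeg, hn]
  · rintro m hm
    exact tsub_add_cancel_of_le (Finset.mem_filter.1 hm).2
  · exact fun m _ ↦ add_tsub_cancel_right m v

theorem card_filter_le_mem_eventuallyPolynomial (v : σ → ℕ) :
    (fun n ↦ (#{m ∈ Finset.piAntidiag Finset.univ n | v ≤ m} : F)) ∈ eventuallyPolynomial F := by
  rw [mem_eventuallyPolynomial_iff]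
  rcases hσ : Fintype.card σ with _ | d
  · refine ⟨∑ j, v j + 1, 0, fun n hn ↦ ?_⟩
    obtain ⟨t, ht⟩ := Nat.exists_eq_add_of_lt hn
    rw [card_filter_le_piAntidiag_univ v (by lia), hσ,
      show n - ∑ j, v j = t + 1 by lia, Nat.multichoose_zero_succ]
    simp
  · refine ⟨∑ j, v j, preHilbertPoly F d (∑ j, v j), fun n hn ↦ ?_⟩
    rw [card_filter_le_piAntidiag_univ v hn, preHilbertPoly_eq_choose_sub_add F d hn, hσ,
      Nat.multichoose_eq, Nat.succ_add_sub_one, add_comm, Nat.choose_symm_add]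

theorem card_filter_le_and_forall_not_le_mem_eventuallyPolynomial (U : Finset (σ → ℕ))
    (v : σ → ℕ) :
    (fun n ↦ (#{m ∈ Finset.piAntidiag Finset.univ n | v ≤ m ∧ ∀ u ∈ U, ¬ u ≤ m} : F)) ∈
      eventuallyPolynomial F := by
  induction U using Finset.induction_on generalizing v with
  | empty => simpa using card_filter_le_mem_eventuallyPolynomial F v
  | insert u U _ ih =>
    convert sub_mem (ih v) (ih (v ⊔ u)) using 2 with n
    rw [Pi.sub_apply, eq_sub_iff_add_eq]
    norm_cast
    rw [← Finset.card_filter_add_card_filter_not (s := {m ∈ _ | v ≤ m ∧ ∀ u ∈ U, ¬ u ≤ m})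
      (fun m ↦ u ≤ m), Finset.filter_filter, Finset.filter_filter, add_comm]
    congr 3 <;> grind [sup_le_iff]

theorem exists_finset_forall_mem_iff_not_le_of_isLowerSet {α : Type*} [PartialOrder α]
    [WellQuasiOrderedLE α] {L : Set α} (hL : IsLowerSet L) :
    ∃ U : Finset α, ∀ a, a ∈ L ↔ ∀ u ∈ U, ¬ u ≤ a := by
  have hfin : {u | Minimal (· ∉ L) u}.Finite :=
    WellQuasiOrderedLE.finite_of_isAntichain (setOfPred_minimal_antichain _)
  refine ⟨hfin.toFinset, fun a ↦ ⟨fun ha u hu hua ↦ ?_, fun h ↦ ?_⟩⟩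
  · have hmin : Minimal (· ∉ L) u := by simpa using hu
    exact hmin.prop (hL hua ha)
  · by_contra ha
    obtain ⟨u, hua, hu⟩ := exists_minimal_le_of_wellFoundedLT (· ∉ L) a ha
    exact h u (hfin.mem_toFinset.2 hu) hua

omit [DecidableLE (σ → ℕ)] in
theorem card_filter_mem_mem_eventuallyPolynomial_of_isLowerSet {L : Set (σ → ℕ)}
    [DecidablePred (· ∈ L)] (hL : IsLowerSet L) :
    (fun n ↦ (#{m ∈ Finset.piAntidiag Finset.univ n | m ∈ L} : F)) ∈ eventuallyPolynomial F := by
  classical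
  obtain ⟨U, hU⟩ := exists_finset_forall_mem_iff_not_le_of_isLowerSet hL
  simpa [hU] using card_filter_le_and_forall_not_le_mem_eventuallyPolynomial F U 0

end HilbertFunction

section Sumset

theorem card_image_eq_card_filter_forall_key_le {α β γ : Type*} [DecidableEq β] [LinearOrder γ]
    (s : Finset α) (f : α → β) {key : α → γ} (hkey : Function.Injective key) :
    #(s.image f) = #{a ∈ s | ∀ a' ∈ s, f a' = f a → key a ≤ key a'} := by
  have himage : s.image f = {a ∈ s | ∀ a' ∈ s, f a' = f a → key a ≤ key a'}.image f := by
    refine (Finset.image_subset_iff.2 fun a ha ↦ ?_).antisymm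
      (Finset.image_subset_image (Finset.filter_subset _ _))
    obtain ⟨a₀, ha₀, hmin⟩ := Finset.exists_min_image {a' ∈ s | f a' = f a} key ⟨a, by simp [ha]⟩
    grind
  rw [himage, Finset.card_image_of_injOn]
  intro a ha a' ha' h
  simp only [Finset.coe_filter, Set.mem_ofPred_eq] at ha ha'
  exact hkey ((ha.2 a' ha'.1 h.symm).antisymm (ha'.2 a ha.1 h))

variable {M σ ι : Type*} [AddCommMonoid M] [Fintype σ]

theorem nsmul_range_single_one [DecidableEq σ] (n : ℕ) :
    n • Set.range (fun j : σ ↦ (Pi.single j 1 : σ → ℕ)) = {m | ∑ j, m j = n} := by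
  induction n with
  | zero => ext m; simp [funext_iff]
  | succ n ih =>
    rw [succ_nsmul, ih]
    ext m
    constructor
    · rintro ⟨m, hm, _, ⟨j, rfl⟩, rfl⟩
      simpa [Finset.sum_add_distrib] using hm
    · intro hm
      have hne : ∑ j, m j ≠ 0 := by rw [hm]; exact n.succ_ne_zero
      obtain ⟨j, -, hj⟩ := Finset.exists_ne_zero_of_sum_ne_zero hne
      have hle : (Pi.single j 1 : σ → ℕ) ≤ m := by
        simpa [Pi.single, update_le_iff] using Nat.one_le_iff_ne_zero.2 hj
      refine ⟨m - (Pi.single j 1 : σ → ℕ), ?_, _, ⟨j, rfl⟩, tsub_add_cancel_of_le hle⟩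
      have hsum : ∑ i, (m - (Pi.single j 1 : σ → ℕ)) i + 1 = ∑ i, m i := by
        conv_rhs => rw [← tsub_add_cancel_of_le hle]
        simp [Finset.sum_add_distrib]
      exact add_right_cancel (hsum.trans hm)

theorem nsmul_range_eq_image_linearCombination (a : σ → M) (n : ℕ) :
    n • Set.range a = Fintype.linearCombination ℕ a '' {m | ∑ j, m j = n} := by
  classical
  rw [← nsmul_range_single_one, Set.image_nsmul, ← Set.range_comp]
  congr 2
  ext j
  simp

variable [LinearOrder σ] [LinearOrder ι]

/-- The exponent vectors `m` for which the representation `b i + f m` of an element of `M` is least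
among its representations of the same degree. Exponent vectors are compared lexicographically, and
ties are broken by the index `i`. -/
def leastRepresentations (f : (σ → ℕ) →+ M) (b : ι → M) (i : ι) : Set (σ → ℕ) :=
  {m | ∀ i' m', ∑ j, m' j = ∑ j, m j → b i' + f m' = b i + f m →
    toLex (toLex m, i) ≤ toLex (toLex m', i')}

theorem isLowerSet_leastRepresentations (f : (σ → ℕ) →+ M) (b : ι → M) (i : ι) :
    IsLowerSet (leastRepresentations f b i) := by
  intro m m₀ hle hm i' m' hdeg heq
  obtain ⟨e, rfl⟩ := exists_add_of_le hle
  have hlex : toLex (toLex (m₀ + e), i) ≤ toLex (toLex (m' + e), i') :=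
    hm i' (m' + e) (by simp [Finset.sum_add_distrib, hdeg]) (by simp [← add_assoc, heq])
  simpa [Prod.Lex.toLex_le_toLex, toLex_add] using hlex

variable [Fintype ι] (F : Type*) [Field F] [CharZero F]

theorem card_image_add_mem_eventuallyPolynomial [DecidableEq M] (f : (σ → ℕ) →+ M) (b : ι → M) :
    (fun n ↦ (#((Finset.univ ×ˢ Finset.piAntidiag Finset.univ n).image
      fun p : ι × (σ → ℕ) ↦ b p.1 + f p.2) : F)) ∈ eventuallyPolynomial F := by
  classical
  have hkey : Function.Injective fun p : ι × (σ → ℕ) ↦ toLex (toLex p.2, p.1) := by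
    rintro ⟨i, m⟩ ⟨i', m'⟩ h
    simpa [and_comm] using h
  have hcard (n : ℕ) : #((Finset.univ ×ˢ Finset.piAntidiag Finset.univ n).image
      fun p : ι × (σ → ℕ) ↦ b p.1 + f p.2) =
        ∑ i, #{m ∈ Finset.piAntidiag Finset.univ n | m ∈ leastRepresentations f b i} := by
    rw [card_image_eq_card_filter_forall_key_le _ _ hkey]
    simp only [Finset.card_filter, Finset.sum_product]
    refine Finset.sum_congr rfl fun i _ ↦ Finset.sum_congr rfl fun m hm ↦ ?_
    have hdeg : ∑ j, m j = n := by simpa using hm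
    simp [leastRepresentations, hdeg]
  convert sum_mem fun i (_ : i ∈ Finset.univ) ↦
    card_filter_mem_mem_eventuallyPolynomial_of_isLowerSet F
      (isLowerSet_leastRepresentations f b i) using 1
  ext n
  simp [hcard]

omit [Fintype σ] [LinearOrder σ] [LinearOrder ι] [Fintype ι] in
theorem ncard_add_nsmul_mem_eventuallyPolynomial {A B : Set M} (hA : A.Finite) (hB : B.Finite) :
    (fun n : ℕ ↦ ((B + n • A).ncard : F)) ∈ eventuallyPolynomial F := by
  classical
  obtain ⟨_, -⟩ := exists_wellFoundedLT M
  have := hA.fintype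
  have := hB.fintype
  convert card_image_add_mem_eventuallyPolynomial F
    (Fintype.linearCombination ℕ ((↑) : A → M)).toAddMonoidHom ((↑) : B → M) using 3 with n
  rw [← Set.ncard_coe_finset]
  congr 1
  conv_lhs => rw [← Subtype.range_coe (s := A), nsmul_range_eq_image_linearCombination]
  ext x
  simp [Set.mem_add]

end Sumset

section ConvexHull

variable {𝕜 E : Type*} [Field 𝕜] [LinearOrder 𝕜] [IsStrictOrderedRing 𝕜] [AddCommGroup E]
  [Module 𝕜 E] {s : Finset E} {c : 𝕜}

theorem mem_smul_convexHull_iff (hc : 0 < c) {x : E} :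
    x ∈ c • convexHull 𝕜 (s : Set E) ↔
      ∃ w : E → 𝕜, (∀ y ∈ s, 0 ≤ w y) ∧ ∑ y ∈ s, w y = c ∧ ∑ y ∈ s, w y • y = x := by
  rw [Set.mem_smul_set_iff_inv_smul_mem₀ hc.ne', Finset.mem_convexHull']
  constructor
  · rintro ⟨w, hw, hsum, hx⟩
    refine ⟨c • w, fun y hy ↦ mul_nonneg hc.le (hw y hy), ?_, ?_⟩
    · simp [← Finset.mul_sum, hsum]
    · simp [mul_smul, ← Finset.smul_sum, hx, hc.ne']
  · rintro ⟨w, hw, hsum, hx⟩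
    refine ⟨c⁻¹ • w, fun y hy ↦ mul_nonneg (inv_nonneg.2 hc.le) (hw y hy), ?_, ?_⟩
    · simp [← Finset.mul_sum, hsum, hc.ne']
    · simp [mul_smul, ← Finset.smul_sum, hx]

theorem add_one_smul_convexHull (hc : 0 < c) (hs : (#s : 𝕜) ≤ c + 1) :
    (c + 1) • convexHull 𝕜 (s : Set E) = c • convexHull 𝕜 (s : Set E) + (s : Set E) := by
  classical
  refine Set.Subset.antisymm (fun x hx ↦ ?_) ?_
  · obtain ⟨w, hw, hsum, rfl⟩ := (mem_smul_convexHull_iff (by positivity)).1 hx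
    have hne : s.Nonempty := Finset.nonempty_of_sum_ne_zero (hsum.trans_ne (by positivity))
    obtain ⟨v, hv, hwv⟩ : ∃ v ∈ s, 1 ≤ w v :=
      Finset.exists_le_of_sum_le hne (by simpa [hsum] using hs)
    let w' : E → 𝕜 := w - Pi.single v 1
    refine ⟨∑ y ∈ s, w' y • y,
      (mem_smul_convexHull_iff hc).2 ⟨w', fun y hy ↦ ?_, ?_, rfl⟩, v, hv, ?_⟩
    · rcases eq_or_ne y v with rfl | hyv
      · simpa [w'] using hwv
      · simpa [w', hyv] using hw y hy
    · simp [w', hsum, hv]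
    · simp [w', sub_smul, Pi.single_apply, hv]
  · rw [(convex_convexHull 𝕜 _).add_smul hc.le zero_le_one, one_smul]
    exact Set.add_subset_add_left (subset_convexHull 𝕜 _)

end ConvexHull

section LatticePoints

/-- The points of `S` with coordinates in `ℕ`, as a set of vectors of natural numbers. -/
def latticePoints {κ R : Type*} [NatCast R] (S : Set (κ → R)) : Set (κ → ℕ) :=
  {a | (fun i ↦ (a i : R)) ∈ S}

variable {κ 𝕜 : Type*} [Field 𝕜] [LinearOrder 𝕜] [IsStrictOrderedRing 𝕜]

theorem latticePoints_add {S T : Set (κ → 𝕜)} (hS : S ⊆ Set.Ici 0)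
    (hT : ∀ x ∈ T, ∀ i, ∃ m : ℕ, x i = m) :
    latticePoints (S + T) = latticePoints S + latticePoints T := by
  ext a
  constructor
  · rintro ⟨x, hx, y, hy, hxy⟩
    choose b hb using hT y hy
    obtain rfl : y = fun i ↦ (b i : 𝕜) := funext hb
    have hx_eq (i : κ) : x i = a i - b i := eq_sub_of_add_eq (congrFun hxy i)
    have hba : b ≤ a := fun i ↦ by
      have : (0 : 𝕜) ≤ a i - b i := hx_eq i ▸ hS hx i
      exact_mod_cast sub_nonneg.1 this
    refine ⟨a - b, ?_, b, hy, tsub_add_cancel_of_le hba⟩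
    obtain rfl : x = fun i ↦ ((a - b) i : 𝕜) := funext fun i ↦ by
      simp [hx_eq, Nat.cast_sub (hba i)]
    exact hx
  · rintro ⟨b, hb, c, hc, rfl⟩
    exact ⟨_, hb, _, hc, by ext i; simp⟩

theorem latticePoints_finite_of_subset_Iic [Finite κ] {S : Set (κ → 𝕜)} {u : κ → ℕ}
    (hS : S ⊆ Set.Iic fun i ↦ (u i : 𝕜)) : (latticePoints S).Finite := by
  classical
  have := Fintype.ofFinite κ
  exact (Set.finite_Iic u).subset fun a ha i ↦ Nat.cast_le.1 (hS ha i)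

theorem latticePoints_coe_finset_finite (V : Finset (κ → 𝕜)) :
    (latticePoints (V : Set (κ → 𝕜))).Finite :=
  V.finite_toSet.preimage fun _ _ _ _ h ↦ funext fun i ↦ Nat.cast_injective (congrFun h i)

variable {V : Finset (κ → 𝕜)} (hV : ∀ v ∈ V, ∀ i, ∃ m : ℕ, v i = m)

include hV in
theorem smul_convexHull_subset_Ici_zero (n : ℕ) :
    (n : 𝕜) • convexHull 𝕜 (V : Set (κ → 𝕜)) ⊆ Set.Ici 0 := by
  have hsub : convexHull 𝕜 (V : Set (κ → 𝕜)) ⊆ Set.Ici 0 := by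
    refine convexHull_min (fun v hv i ↦ ?_) (convex_Ici 0)
    obtain ⟨m, hm⟩ := hV v hv i
    simp [hm]
  rintro _ ⟨x, hx, rfl⟩
  exact fun i ↦ mul_nonneg n.cast_nonneg (hsub hx i)

include hV in
theorem latticePoints_smul_convexHull_finite [Finite κ] (n : ℕ) :
    (latticePoints ((n : 𝕜) • convexHull 𝕜 (V : Set (κ → 𝕜)))).Finite := by
  obtain ⟨u, hu⟩ := (latticePoints_coe_finset_finite V).bddAbove
  have hsub : convexHull 𝕜 (V : Set (κ → 𝕜)) ⊆ Set.Iic fun i ↦ (u i : 𝕜) := by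
    refine convexHull_min (fun v hv ↦ ?_) (convex_Iic _)
    choose a ha using hV v hv
    obtain rfl : v = fun i ↦ (a i : 𝕜) := funext ha
    exact fun i ↦ Nat.cast_le.2 (hu hv i)
  refine latticePoints_finite_of_subset_Iic (u := n • u) ?_
  rintro _ ⟨x, hx, rfl⟩ i
  simpa using mul_le_mul_of_nonneg_left (hsub hx i) n.cast_nonneg

include hV in
theorem latticePoints_add_smul_convexHull {N : ℕ} (hN : #V < N) (n : ℕ) :
    latticePoints (((N + n : ℕ) : 𝕜) • convexHull 𝕜 (V : Set (κ → 𝕜))) =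
      latticePoints ((N : 𝕜) • convexHull 𝕜 (V : Set (κ → 𝕜))) +
        n • latticePoints (V : Set (κ → 𝕜)) := by
  induction n with
  | zero => simp
  | succ n ih =>
    have hpos : (0 : 𝕜) < (N + n : ℕ) := by exact_mod_cast (by lia : 0 < N + n)
    have hcard : (#V : 𝕜) ≤ (N + n : ℕ) + 1 := by exact_mod_cast (by lia : #V ≤ N + n + 1)
    rw [← add_assoc, Nat.cast_add_one, add_one_smul_convexHull hpos hcard,
      latticePoints_add (smul_convexHull_subset_Ici_zero hV _) hV, ih, succ_nsmul, add_assoc]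

end LatticePoints

theorem exists_addMonoidHom_ncard_image_eq {A : Type u} {X : Type*} [AddCommMonoid A] (χ : A → X)
    (hχ : ∀ a b c d : A, χ a = χ c → χ b = χ d → χ (a + b) = χ (c + d)) :
    ∃ (M : Type u) (_ : AddCommMonoid M) (f : A →+ M), ∀ S : Set A,
      (χ '' S).ncard = (f '' S).ncard := by
  let c : AddCon A := { Setoid.ker χ with add' := hχ _ _ _ _ }
  let g : c.Quotient → X := Setoid.kerLift χ
  have hg : Function.Injective g := Setoid.kerLift_injective χ
  refine ⟨c.Quotient, inferInstance, c.mk', fun S ↦ ?_⟩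
  have hfactor : χ '' S = g '' (c.mk' '' S) := (Set.image_image g c.mk' S).symm
  rw [hfactor, Set.ncard_image_of_injective _ hg]

theorem number_of_colors_in_dilated_lattice_polytope_eventually_polynomial_general
    {κ 𝕜 X : Type*} [Finite κ] [Field 𝕜] [LinearOrder 𝕜] [IsStrictOrderedRing 𝕜]
    (V : Finset (κ → 𝕜)) (hV : ∀ v ∈ V, ∀ i, ∃ m : ℕ, v i = m) (χ : (κ → ℕ) → X)
    (hχ : ∀ a b c d : κ → ℕ, χ a = χ c → χ b = χ d → χ (a + b) = χ (c + d)) :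
    ∃ (N : ℕ) (p : 𝕜[X]), ∀ n : ℕ, N ≤ n →
      ((χ '' latticePoints ((n : 𝕜) • convexHull 𝕜 (V : Set (κ → 𝕜)))).ncard : 𝕜) =
        p.eval (n : 𝕜) := by
  obtain ⟨M, _, f, hf⟩ := exists_addMonoidHom_ncard_image_eq χ hχ
  simp only [hf]
  refine mem_eventuallyPolynomial_iff.1 (mem_eventuallyPolynomial_of_comp_add (#V + 1) ?_)
  simp only [latticePoints_add_smul_convexHull hV (#V).lt_succ_self, Set.image_add,
    Set.image_nsmul]
  exact ncard_add_nsmul_mem_eventuallyPolynomial 𝕜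
    ((latticePoints_coe_finset_finite V).image f)
    ((latticePoints_smul_convexHull_finite hV _).image f)

/-- Let `P` be a polytope in `ℝ^k` whose vertices lie in `ℕ₀^k`
(formalized as the convex hull of a nonempty finite set `V` of points with natural
coordinates), and let `χ : ℕ₀^k → X` be an additive coloring. Then there exist a
constant `N` and a polynomial `p` such that for all `n ≥ N`, the number of colors
`|χ(nP ∩ ℤ^k)| = |χ(nP ∩ ℕ₀^k)|` equals `p(n)`. -/
theorem number_of_colors_in_dilated_lattice_polytope_eventually_polynomial
    {k : ℕ} {X : Type*} (V : Finset (Fin k → ℝ)) (hVne : V.Nonempty)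
    (hV : ∀ v ∈ V, ∀ i, ∃ m : ℕ, v i = (m : ℝ))
    (χ : (Fin k → ℕ) → X)
    (hχ : ∀ a b c d : Fin k → ℕ, χ a = χ c → χ b = χ d → χ (a + b) = χ (c + d)) :
    ∃ (N : ℕ) (p : Polynomial ℝ), ∀ n : ℕ, N ≤ n →
      ((χ '' {a : Fin k → ℕ |
          (fun i => (a i : ℝ)) ∈ (n : ℝ) • convexHull ℝ (V : Set (Fin k → ℝ))}).ncard : ℝ)
        = p.eval (n : ℝ) :=
  number_of_colors_in_dilated_lattice_polytope_eventually_polynomial_general V hV χ hχ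
end

section
/- Let A₁, …, A_l be finite subsets of a commutative semigroup (G,+). Then the function (n₁,…,n_l) ↦ |n₁*A₁ + ⋯ + n_l*A_l| from ℕ₀^l to ℕ₀ is strongly eventually polynomial: there exists a constant c ∈ ℕ such that for any l-tuple (n₁,…,n_l), if the arguments n_i not exceeding c are fixed, then |n₁*A₁ + ⋯ + n_l*A_l| is a polynomial function of the remaining arguments n_i that are bigger than c. -/
open Pointwise

/-- The `n`-fold sumset `n*A` in a commutative monoid (the commutative-semigroup
statement is interpreted, as in the paper, in a semigroup with an adjoined neutral
element, so that `0*A = {0}`). -/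
def iterSumset {G : Type*} [AddCommMonoid G] : ℕ → Set G → Set G
  | 0, _ => {0}
  | n + 1, A => iterSumset n A + A

/-- A function `f : ℕ₀^l → ℝ` is strongly eventually polynomial if there is a constant
`c ∈ ℕ` and, for every word `w ∈ ({0,…,c} ∪ {∞})^l` (encoded as `Fin l → Option ℕ`,
with `none` playing the role of `∞`), a polynomial `p_w ∈ ℝ[x₁,…,x_l]` such that
`f(n) = p_{w(n)}(n)`, where `w(n)_i = n_i` if `n_i ≤ c` and `w(n)_i = ∞` if `n_i > c`. -/
def StronglyEventuallyPolynomial {l : ℕ} (f : (Fin l → ℕ) → ℝ) : Prop :=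
  ∃ c : ℕ, 0 < c ∧ ∃ p : (Fin l → Option ℕ) → MvPolynomial (Fin l) ℝ,
    ∀ n : Fin l → ℕ,
      f n = MvPolynomial.eval (fun i => (n i : ℝ))
        (p fun i => if n i ≤ c then some (n i) else none)

/-!
Index the elements of `A i` as `a i j`. A vector `x` of multiplicities `x i j` represents the
element `∑ i, ∑ j, x i j • a i j`, which lies in `∑ i, iterSumset (n i) (A i)` when `n` is the
multidegree of `x`, i.e. `∑ j, x i j = n i` for all `i`.

Call a vector lexicographically minimal among all vectors of the same multidegree and value
*reduced*. A translation-invariant well-order picks exactly one reduced vector per element of the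
sumset, and if `x + z` is reduced then so is `x`, so the reduced vectors form a lower set. By
Dickson's lemma, membership in a lower set depends only on the truncation `x ⊓ b` for a suitable
`b`. The vectors of multidegree `n` with a given truncation form a product over `i`, and each
factor consists of the ways to distribute what is left of `n i` among the coordinates that reach
`b`. The number of these ways is a binomial coefficient, which is eventually polynomial in `n i`.
-/

/-- A real function on `ℕ` is eventually polynomial if it agrees with a polynomial at all
sufficiently large arguments; this is the one-variable building block of
`StronglyEventuallyPolynomial`. -/
def EventuallyPolynomial (f : ℕ → ℝ) : Prop :=
  ∃ P : Polynomial ℝ, ∀ᶠ n : ℕ in Filter.atTop, f n = P.eval (n : ℝ)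

theorem eventuallyPolynomial_multichoose_sub (r s : ℕ) :
    EventuallyPolynomial fun n => (r.multichoose (n - s) : ℝ) := by
  cases r with
  | zero =>
    refine ⟨0, (Filter.eventually_gt_atTop s).mono fun n hn => ?_⟩
    obtain ⟨m, hm⟩ := Nat.exists_eq_succ_of_ne_zero (Nat.sub_ne_zero_of_lt hn)
    simp only [hm, Nat.multichoose_zero_succ, Nat.cast_zero, Polynomial.eval_zero]
  | succ r =>
    refine ⟨Polynomial.preHilbertPoly ℝ r s, (Filter.eventually_ge_atTop s).mono fun n hn => ?_⟩
    have hchoose : (r + 1).multichoose (n - s) = (n - s + r).choose r := by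
      rw [Nat.multichoose_eq, Nat.add_right_comm, Nat.add_sub_cancel, Nat.add_comm r,
        Nat.choose_symm_add]
    rw [Polynomial.preHilbertPoly_eq_choose_sub_add ℝ r hn, ← hchoose]

theorem StronglyEventuallyPolynomial.sum_prod {T : Type*} {l : ℕ} (S : Finset T)
    {g : T → Fin l → ℕ → ℝ} (hg : ∀ t ∈ S, ∀ i, EventuallyPolynomial (g t i)) :
    StronglyEventuallyPolynomial fun n : Fin l → ℕ => ∑ t ∈ S, ∏ i, g t i (n i) := by
  choose! P hP using hg
  have hP_common : ∀ᶠ c : ℕ in Filter.atTop, ∀ t ∈ S, ∀ i, g t i c = (P t i).eval (c : ℝ) :=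
    (Filter.eventually_all_finset S).2 fun t ht => Filter.eventually_all.2 (hP t ht)
  obtain ⟨c, hc⟩ := Filter.eventually_atTop.1 hP_common
  refine ⟨c + 1, c.succ_pos, fun w => ∑ t ∈ S, ∏ i, (w i).elim
    (Polynomial.aeval (MvPolynomial.X i) (P t i)) fun m => MvPolynomial.C (g t i m), fun n => ?_⟩
  simp only [map_sum, map_prod]
  refine Finset.sum_congr rfl fun t ht => Finset.prod_congr rfl fun i _ => ?_
  by_cases h : n i ≤ c + 1
  · simp [h]
  · simp [h, hc (n i) (by omega) t ht i, Polynomial.aeval_def, Polynomial.hom_eval₂]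

theorem exists_forall_mem_iff_inf_mem {M : Type*} [Lattice M] [Nonempty M]
    [WellQuasiOrderedLE M] {D : Set M} (hD : IsLowerSet D) :
    ∃ b, ∀ x, x ∈ D ↔ x ⊓ b ∈ D := by
  have hfin : {m | Minimal (· ∉ D) m}.Finite :=
    WellQuasiOrderedLE.finite_of_isAntichain (setOfPred_minimal_antichain (· ∉ D))
  obtain ⟨b, hb⟩ := hfin.bddAbove
  refine ⟨b, fun x => ⟨hD inf_le_left, fun hxb => ?_⟩⟩
  by_contra hx
  obtain ⟨m, hmx, hm⟩ := exists_minimal_le_of_wellFoundedLT (· ∉ D) x hx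
  exact hm.prop (hD (le_inf hmx (hb hm)) hxb)

theorem exists_isLowerSet_bijOn_range {M L H : Type*} [Add M] [LE M] [ExistsAddOfLE M]
    [Add L] [LinearOrder L] [AddRightReflectLE L] [WellFoundedLT L] [Add H]
    (e : M →ₙ+ L) (he : Function.Injective e) (φ : M →ₙ+ H) :
    ∃ D : Set M, IsLowerSet D ∧ Set.BijOn φ D (Set.range φ) := by
  refine ⟨{x | ∀ y, φ y = φ x → e x ≤ e y}, ?lower, fun x _ => ⟨x, rfl⟩, ?inj, ?surj⟩
  case lower =>
    intro x' x hle hx' y hy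
    obtain ⟨z, rfl⟩ := exists_add_of_le hle
    have h : e (x + z) ≤ e (y + z) := hx' _ (by rw [map_add, map_add, hy])
    rw [map_add, map_add] at h
    exact le_of_add_le_add_right h
  case inj =>
    exact fun x hx y hy hxy => he ((hx y hxy.symm).antisymm (hy x hxy))
  case surj =>
    rintro _ ⟨x, rfl⟩
    obtain ⟨y, hyx, hy⟩ :=
      exists_minimalFor_of_wellFoundedLT (fun y => φ y = φ x) e ⟨x, rfl⟩
    refine ⟨y, fun z hz => ?_, hyx⟩
    exact (le_total (e y) (e z)).elim id (hy (hz.trans hyx))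

section Truncation

variable {κ : Type*} [DecidableEq κ]

theorem card_piAntidiag_eq_multichoose (s : Finset κ) (n : ℕ) :
    (s.piAntidiag n).card = s.card.multichoose n := by
  rw [← Finset.card_finsuppAntidiag_nat_eq_multichoose, Finset.finsuppAntidiag, Finset.card_map,
    Finset.card_attach]

variable [Fintype κ]

theorem mem_piAntidiag_iff_sum_univ {s : Finset κ} {n : ℕ} {x : κ → ℕ} :
    x ∈ s.piAntidiag n ↔ ∑ j, x j = n ∧ ∀ j, x j ≠ 0 → j ∈ s := by
  rw [Finset.mem_piAntidiag]
  refine and_congr_left fun hsupp => ?_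
  rw [Finset.sum_subset s.subset_univ fun j _ hj => not_not.1 (mt (hsupp j) hj)]

/-- The multiplicity vectors of total size `n` whose truncation at `b` is `t`. -/
def truncationFiber (b t : κ → ℕ) (n : ℕ) : Finset (κ → ℕ) :=
  (Finset.univ.piAntidiag n).filter (· ⊓ b = t)

theorem truncationFiber_eq_map {b t : κ → ℕ} (ht : t ≤ b) {n : ℕ} (hn : ∑ j, t j ≤ n) :
    truncationFiber b t n =
      ((Finset.univ.filter fun j => t j = b j).piAntidiag (n - ∑ j, t j)).map
        (addLeftEmbedding t) := by
  ext x
  simp only [truncationFiber, Finset.mem_filter, mem_piAntidiag_iff_sum_univ, Finset.mem_map,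
    Finset.mem_univ, implies_true, and_true, true_and, addLeftEmbedding_apply]
  constructor
  · rintro ⟨hx, htrunc⟩
    have htx : t ≤ x := htrunc ▸ inf_le_left
    refine ⟨x - t, ⟨?_, fun j hj => ?_⟩, add_tsub_cancel_of_le htx⟩
    · simp only [Pi.sub_apply, Finset.sum_tsub_distrib _ fun j _ => htx j, hx]
    · have htj : min (x j) (b j) = t j := congrFun htrunc j
      rw [Pi.sub_apply] at hj
      omega
  · rintro ⟨y, ⟨hy, hsupp⟩, rfl⟩
    refine ⟨?_, funext fun j => ?_⟩
    · simp only [Pi.add_apply, Finset.sum_add_distrib, hy, Nat.add_sub_cancel' hn]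
    · have hbj : t j ≤ b j := ht j
      have hyj : y j ≠ 0 → t j = b j := hsupp j
      change min (t j + y j) (b j) = t j
      omega

theorem eventuallyPolynomial_card_truncationFiber {b t : κ → ℕ} (ht : t ≤ b) :
    EventuallyPolynomial fun n => ((truncationFiber b t n).card : ℝ) := by
  obtain ⟨P, hP⟩ := eventuallyPolynomial_multichoose_sub
    (Finset.univ.filter fun j => t j = b j).card (∑ j, t j)
  refine ⟨P, ?_⟩
  filter_upwards [hP, Filter.eventually_ge_atTop (∑ j, t j)] with n hPn hn
  rw [truncationFiber_eq_map ht hn, Finset.card_map, card_piAntidiag_eq_multichoose, hPn]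

end Truncation

section Multidegree

variable {ι : Type*} [Fintype ι] {κ : ι → Type*} [∀ i, Fintype (κ i)]

variable (κ) in
/-- The multiplicity vectors of multidegree `n`: the `i`-th block of coordinates sums to `n i`. -/
def multidegreeFiber (n : ι → ℕ) : Set (∀ i, κ i → ℕ) :=
  {x | ∀ i, ∑ j, x i j = n i}

theorem ncard_inter_multidegreeFiber [DecidableEq ι] [∀ i, DecidableEq (κ i)]
    {D : Set (∀ i, κ i → ℕ)} [DecidablePred (· ∈ D)] {b : ∀ i, κ i → ℕ}
    (hb : ∀ x, x ∈ D ↔ x ⊓ b ∈ D) (n : ι → ℕ) :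
    (D ∩ multidegreeFiber κ n).ncard =
      ∑ t ∈ (Finset.Iic b).filter (· ∈ D), ∏ i, (truncationFiber (b i) (t i) (n i)).card := by
  let S : Finset (∀ i, κ i → ℕ) :=
    (Fintype.piFinset fun i => Finset.univ.piAntidiag (n i)).filter (· ∈ D)
  have hcoe : D ∩ multidegreeFiber κ n = S := by
    ext x
    simp [multidegreeFiber, S, and_comm]
  have htrunc : ∀ x ∈ S, x ⊓ b ∈ (Finset.Iic b).filter (· ∈ D) := fun x hx =>
    Finset.mem_filter.2
      ⟨Finset.mem_Iic.2 inf_le_right, (hb x).1 (Finset.mem_filter.1 hx).2⟩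
  rw [hcoe, Set.ncard_coe_finset, Finset.card_eq_sum_card_fiberwise htrunc]
  refine Finset.sum_congr rfl fun t ht => ?_
  rw [← Fintype.card_piFinset]
  congr 1
  ext x
  have htD : x ⊓ b = t → x ∈ D := fun h => (hb x).2 (h ▸ (Finset.mem_filter.1 ht).2)
  have hext : x ⊓ b = t ↔ ∀ i, x i ⊓ b i = t i := funext_iff
  simp only [S, truncationFiber, Finset.mem_filter, Fintype.mem_piFinset, forall_and, ← hext]
  tauto

theorem stronglyEventuallyPolynomial_ncard_inter_multidegreeFiber {l : ℕ} {κ : Fin l → Type*}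
    [∀ i, Fintype (κ i)] {D : Set (∀ i, κ i → ℕ)} (hD : IsLowerSet D) :
    StronglyEventuallyPolynomial fun n => ((D ∩ multidegreeFiber κ n).ncard : ℝ) := by
  classical
  obtain ⟨b, hb⟩ := exists_forall_mem_iff_inf_mem hD
  have hpoly : ∀ t ∈ (Finset.Iic b).filter (· ∈ D), ∀ i,
      EventuallyPolynomial fun m => ((truncationFiber (b i) (t i) m).card : ℝ) := fun t ht i =>
    eventuallyPolynomial_card_truncationFiber (Finset.mem_Iic.1 (Finset.mem_filter.1 ht).1 i)
  simpa only [ncard_inter_multidegreeFiber hb, Nat.cast_sum, Nat.cast_prod] using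
    StronglyEventuallyPolynomial.sum_prod _ hpoly

end Multidegree

section Sumset

theorem setOf_sum_eq_succ {κ : Type*} [Fintype κ] [DecidableEq κ] (n : ℕ) :
    {x : κ → ℕ | ∑ j, x j = n + 1} =
      {x | ∑ j, x j = n} + Set.range fun j => Pi.single j 1 := by
  ext x
  simp only [Set.mem_add, Set.exists_range_iff, Set.mem_ofPred_eq]
  constructor
  · intro hx
    obtain ⟨j, -, hj⟩ := Finset.exists_ne_zero_of_sum_ne_zero (hx.trans_ne n.succ_ne_zero)
    have hle : Pi.single j 1 ≤ x :=
      update_le_iff.2 ⟨Nat.one_le_iff_ne_zero.2 hj, fun _ _ => Nat.zero_le _⟩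
    obtain ⟨y, rfl⟩ := exists_add_of_le hle
    refine ⟨y, ?_, j, add_comm _ _⟩
    simpa [Finset.sum_add_distrib, add_comm] using hx
  · rintro ⟨y, hy, j, rfl⟩
    simp [Finset.sum_add_distrib, hy]

variable {G : Type*} [AddCommMonoid G]

theorem iterSumset_range {κ : Type*} [Fintype κ] (a : κ → G) (n : ℕ) :
    iterSumset n (Set.range a) = Fintype.linearCombination ℕ a '' {x | ∑ j, x j = n} := by
  classical
  induction n with
  | zero =>
    have hzero : {x : κ → ℕ | ∑ j, x j = 0} = {0} := by
      ext x
      simp [funext_iff]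
    rw [hzero, Set.image_singleton, map_zero, iterSumset]
  | succ n ih =>
    have hunit : Set.range a =
        Fintype.linearCombination ℕ a '' Set.range fun j => Pi.single j 1 := by
      rw [← Set.range_comp]
      congr! 1
      ext j
      simp
    rw [iterSumset, ih, setOf_sum_eq_succ, Set.image_add, ← hunit]

variable {ι : Type*} [Fintype ι] {κ : ι → Type*} [∀ i, Fintype (κ i)]

/-- The additive map sending a vector of multiplicities to its multidegree together with the
element of `G` that it represents in terms of the generators `a`. -/
def multidegreeValue (a : ∀ i, κ i → G) : (∀ i, κ i → ℕ) →ₙ+ (ι → ℕ) × G where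
  toFun x := (fun i => ∑ j, x i j, ∑ i, Fintype.linearCombination ℕ (a i) (x i))
  map_add' x y := by ext <;> simp [Finset.sum_add_distrib]

theorem mem_sum_iterSumset_range {a : ∀ i, κ i → G} {n : ι → ℕ} {g : G} :
    g ∈ ∑ i, iterSumset (n i) (Set.range (a i)) ↔ (n, g) ∈ Set.range (multidegreeValue a) := by
  simp only [iterSumset_range, ← Set.image_fintype_sum_pi]
  constructor
  · rintro ⟨f, hf, rfl⟩
    choose x hx hxf using fun i => hf i trivial
    exact ⟨x, Prod.ext (funext hx) (Finset.sum_congr rfl fun i _ => hxf i)⟩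
  · rintro ⟨x, hx⟩
    obtain ⟨hdeg, hval⟩ := Prod.ext_iff.1 hx
    exact ⟨_, fun i _ => ⟨x i, congrFun hdeg i, rfl⟩, hval⟩

theorem ncard_sum_iterSumset_range {a : ∀ i, κ i → G} {D : Set (∀ i, κ i → ℕ)}
    (hD : Set.BijOn (multidegreeValue a) D (Set.range (multidegreeValue a))) (n : ι → ℕ) :
    (∑ i, iterSumset (n i) (Set.range (a i))).ncard = (D ∩ multidegreeFiber κ n).ncard := by
  have hdeg : ∀ x ∈ multidegreeFiber κ n, multidegreeValue a x = (n, (multidegreeValue a x).2) :=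
    fun x hx => Prod.ext (funext hx) rfl
  have hbij : Set.BijOn (fun x => (multidegreeValue a x).2) (D ∩ multidegreeFiber κ n)
      (∑ i, iterSumset (n i) (Set.range (a i))) := by
    refine ⟨fun x hx => ?_, fun x hx y hy hxy => ?_, fun g hg => ?_⟩
    · exact mem_sum_iterSumset_range.2 ⟨x, hdeg x hx.2⟩
    · refine hD.injOn hx.1 hy.1 ?_
      rw [hdeg x hx.2, hdeg y hy.2]
      exact Prod.ext rfl hxy
    · obtain ⟨x, hx, hxg⟩ := hD.surjOn (mem_sum_iterSumset_range.1 hg)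
      exact ⟨x, ⟨hx, congrFun (congrArg Prod.fst hxg)⟩, congrArg Prod.snd hxg⟩
  exact hbij.ncard_eq.symm

theorem exists_isLowerSet_bijOn_multidegreeValue [LinearOrder ι] [∀ i, LinearOrder (κ i)]
    (a : ∀ i, κ i → G) :
    ∃ D, IsLowerSet D ∧ Set.BijOn (multidegreeValue a) D (Set.range (multidegreeValue a)) := by
  let lex : (∀ i, κ i → ℕ) →ₙ+ Lex (∀ i, Lex (κ i → ℕ)) :=
    { toFun := fun x => toLex fun i => toLex (x i), map_add' := fun _ _ => rfl }
  exact exists_isLowerSet_bijOn_range lex (fun _ _ h => h) (multidegreeValue a)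

end Sumset

/-- For finite sets `A₁, …, A_l` in a commutative semigroup, the
function `(n₁,…,n_l) ↦ |n₁*A₁ + ⋯ + n_l*A_l|` is strongly eventually polynomial. -/
theorem card_sumset_strongly_eventually_polynomial
    {G : Type*} [AddCommMonoid G] {l : ℕ} (A : Fin l → Set G)
    (hA : ∀ i, (A i).Finite) :
    StronglyEventuallyPolynomial
      (fun n : Fin l → ℕ => ((∑ i, iterSumset (n i) (A i)).ncard : ℝ)) := by
  choose k a _ ha using fun i => (hA i).fin_param
  obtain ⟨D, hD, hbij⟩ := exists_isLowerSet_bijOn_multidegreeValue a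
  simp only [← ha, ncard_sum_iterSumset_range hbij]
  exact stronglyEventuallyPolynomial_ncard_inter_multidegreeFiber hD
end

section
/- Let X be a set, B ⊂ X a finite subset, 𝓕 a finite family of mutually commuting mappings from X to itself, and P = {P₁,…,P_l} a partition of 𝓕 into nonempty blocks. Then the function (n₁,…,n_l) ↦ |𝓕^{(n₁,…,n_l)}(B)| from ℕ₀^l to ℕ₀ is strongly eventually polynomial. -/
/-!
Let `f₁, …, f_k` be the maps of the family. Since they commute, a composition is determined by its
exponent vector `a ∈ ℕ^k`, so `ℕ^k` acts on `X`, and `𝓕^{(n)}(B)` is the orbit of `B` under the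
vectors of multidegree `n`. Add the points of `B` one at a time. The new images contributed by `b`
correspond bijectively to the exponent vectors `a` for which `a +ᵥ b` is not an image of an earlier
point in the same multidegree and `a` is least, for a translation-invariant linear order, among
the vectors of its multidegree with that value at `b`. As in the theory of Gröbner bases, these
vectors form a lower set: translating a witness against `a` gives one against `a + c`. By Dickson's
lemma the complement of a lower set is generated by finitely many vectors, so inclusion–exclusion
reduces the count to orthants `{a | g ≤ a}`, where it is a product over the blocks of binomial
coefficients.
-/

open Filter Set
open scoped Pointwise

section StronglyEventuallyPolynomial

variable {l : ℕ}

/-- The word `w(n)` attached to `n` by the threshold `c`, with `none` playing the role of `∞`. -/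
def thresholdWord (c : ℕ) (n : Fin l → ℕ) : Fin l → Option ℕ :=
  fun i => if n i ≤ c then some (n i) else none

theorem thresholdWord_bind_of_le {c d : ℕ} (hcd : c ≤ d) (n : Fin l → ℕ) :
    (fun i => (thresholdWord d n i).bind fun k => if k ≤ c then some k else none) =
      thresholdWord c n := by
  funext i
  by_cases hd : n i ≤ d
  · simp [thresholdWord, hd]
  · simp [thresholdWord, hd, hcd.trans_lt (not_le.mp hd)]

theorem stronglyEventuallyPolynomial_iff_eventually {f : (Fin l → ℕ) → ℝ} :
    StronglyEventuallyPolynomial f ↔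
      ∀ᶠ c in atTop, ∃ p : (Fin l → Option ℕ) → MvPolynomial (Fin l) ℝ,
        ∀ n, f n = MvPolynomial.eval (fun i => (n i : ℝ)) (p (thresholdWord c n)) := by
  constructor
  · rintro ⟨c, -, p, hp⟩
    filter_upwards [eventually_ge_atTop c] with d hcd
    refine ⟨fun w => p fun i => (w i).bind fun k => if k ≤ c then some k else none, fun n => ?_⟩
    beta_reduce
    rw [thresholdWord_bind_of_le hcd]
    exact hp n
  · exact fun h => (h.and (eventually_gt_atTop 0)).exists.imp fun c hc => ⟨hc.2, hc.1⟩

/-- The strongly eventually polynomial functions, as a subalgebra of all functions. -/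
def stronglyEventuallyPolynomialSubalgebra (l : ℕ) : Subalgebra ℝ ((Fin l → ℕ) → ℝ) where
  carrier := {f | StronglyEventuallyPolynomial f}
  algebraMap_mem' r := ⟨1, one_pos, fun _ => MvPolynomial.C r, fun n => by simp⟩
  add_mem' {f g} hf hg := by
    rw [mem_ofPred_eq, stronglyEventuallyPolynomial_iff_eventually] at *
    filter_upwards [hf, hg] with c ⟨p, hp⟩ ⟨q, hq⟩
    exact ⟨p + q, fun n => by simp [hp n, hq n]⟩
  mul_mem' {f g} hf hg := by
    rw [mem_ofPred_eq, stronglyEventuallyPolynomial_iff_eventually] at *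
    filter_upwards [hf, hg] with c ⟨p, hp⟩ ⟨q, hq⟩
    exact ⟨p * q, fun n => by simp [hp n, hq n]⟩

theorem stronglyEventuallyPolynomial_comp_eval {g : ℕ → ℝ}
    (hg : ∃ q : Polynomial ℝ, ∀ᶠ m : ℕ in atTop, g m = q.eval (m : ℝ)) (i : Fin l) :
    StronglyEventuallyPolynomial fun n => g (n i) := by
  obtain ⟨q, hq⟩ := hg
  rw [stronglyEventuallyPolynomial_iff_eventually]
  filter_upwards [eventually_forall_ge_atTop.2 hq] with c hc
  refine ⟨fun w => (w i).elim (q.toMvPolynomial i) fun k => MvPolynomial.C (g k), fun n => ?_⟩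
  by_cases hn : n i ≤ c
  · simp [thresholdWord, hn]
  · simpa [thresholdWord, hn] using hc (n i) (not_le.mp hn).le

end StronglyEventuallyPolynomial

section Simplex

variable {κ : Type*} [Fintype κ]

theorem ncard_setOf_sum_eq (m : ℕ) :
    {a : κ → ℕ | ∑ j, a j = m}.ncard = (Fintype.card κ).multichoose m := by
  classical
  rw [← Sym.card_sym_eq_multichoose, ← Nat.card_eq_fintype_card]
  exact Nat.card_congr (Sym.equivNatSumOfFintype κ m).symm

theorem image_add_setOf_sum_eq (g : κ → ℕ) (m : ℕ) :
    (g + ·) '' {a | ∑ j, a j = m} = {a | g ≤ a ∧ ∑ j, a j = ∑ j, g j + m} := by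
  ext a
  constructor
  · rintro ⟨a, rfl, rfl⟩
    exact ⟨le_self_add, Finset.sum_add_distrib⟩
  · rintro ⟨hga, hsum⟩
    obtain ⟨a, rfl⟩ := exists_add_of_le hga
    refine ⟨a, ?_, rfl⟩
    simpa [Finset.sum_add_distrib] using hsum

theorem exists_polynomial_eventually_eq_multichoose_sub (d k : ℕ) :
    ∃ q : Polynomial ℝ, ∀ᶠ m : ℕ in atTop, (d.multichoose (m - k) : ℝ) = q.eval (m : ℝ) := by
  cases d with
  | zero =>
    refine ⟨0, (eventually_gt_atTop k).mono fun m hm => ?_⟩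
    obtain ⟨r, rfl⟩ := Nat.exists_eq_add_of_lt hm
    simp [add_assoc]
  | succ d =>
    refine ⟨Polynomial.preHilbertPoly ℝ d k, (eventually_ge_atTop k).mono fun m hm => ?_⟩
    rw [Polynomial.preHilbertPoly_eq_choose_sub_add ℝ d hm, Nat.multichoose_eq,
      ← Nat.choose_symm_add]
    congr 2
    omega

theorem exists_polynomial_eventually_eq_ncard_setOf_ge (g : κ → ℕ) :
    ∃ q : Polynomial ℝ, ∀ᶠ m : ℕ in atTop,
      ({a | g ≤ a ∧ ∑ j, a j = m}.ncard : ℝ) = q.eval (m : ℝ) := by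
  obtain ⟨q, hq⟩ := exists_polynomial_eventually_eq_multichoose_sub (Fintype.card κ) (∑ j, g j)
  refine ⟨q, ?_⟩
  filter_upwards [hq, eventually_ge_atTop (∑ j, g j)] with m hm hle
  obtain ⟨r, rfl⟩ := Nat.exists_eq_add_of_le hle
  rw [← hm, ← image_add_setOf_sum_eq, ncard_image_of_injective _ (add_right_injective g),
    ncard_setOf_sum_eq, Nat.add_sub_cancel_left]

end Simplex

section Multidegree

variable {ι : Type*} (κ : ι → Type*) [∀ i, Fintype (κ i)]

/-- The multidegree of an exponent vector whose coordinates are grouped into blocks `κ i`: its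
`i`-th entry is the sum of the coordinates in the block `κ i`. -/
def multidegree : (∀ i, κ i → ℕ) →+ (ι → ℕ) where
  toFun a i := ∑ j, a i j
  map_zero' := by ext; simp
  map_add' a b := by ext; simp [Finset.sum_add_distrib]

variable {κ}

theorem finite_multidegree_preimage_singleton [Finite ι] (n : ι → ℕ) :
    (multidegree κ ⁻¹' {n}).Finite := by
  classical
  cases nonempty_fintype ι
  refine (finite_Iic fun i (_ : κ i) => n i).subset ?_
  rintro a rfl i j
  exact Finset.single_le_sum (fun _ _ => Nat.zero_le _) (Finset.mem_univ j)

/-- The number of elements of a set of exponent vectors in each multidegree. For a lower set this is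
the Hilbert function of the corresponding monomial quotient ring; it is real-valued so that it can
be compared with polynomials. -/
noncomputable def hilbertFunction (S : Set (∀ i, κ i → ℕ)) (n : ι → ℕ) : ℝ :=
  (multidegree κ ⁻¹' {n} ∩ S).ncard

theorem hilbertFunction_Ici [Fintype ι] (g : ∀ i, κ i → ℕ) :
    hilbertFunction (Ici g) =
      ∏ i, fun n => ({a | g i ≤ a ∧ ∑ j, a j = n i}.ncard : ℝ) := by
  ext n
  have hpi : multidegree κ ⁻¹' {n} ∩ Ici g =
      univ.pi fun i => {a | g i ≤ a ∧ ∑ j, a j = n i} := by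
    ext a
    simp [multidegree, funext_iff, Pi.le_def, forall_and, and_comm]
  rw [hilbertFunction, hpi, ← Nat.card_coe_set_eq, Nat.card_congr (Equiv.Set.univPi _),
    Nat.card_pi, Finset.prod_apply, Nat.cast_prod]
  rfl

theorem hilbertFunction_sdiff [Finite ι] {S T : Set (∀ i, κ i → ℕ)} (h : T ⊆ S) :
    hilbertFunction (S \ T) = hilbertFunction S - hilbertFunction T := by
  ext n
  have hfin := finite_multidegree_preimage_singleton (κ := κ) n
  rw [Pi.sub_apply, eq_sub_iff_add_eq]
  simp only [hilbertFunction, inter_sdiff_distrib_left]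
  exact_mod_cast ncard_sdiff_add_ncard_of_subset (inter_subset_inter_right _ h)
    (hfin.inter_of_left S)

end Multidegree

theorem exists_finite_upperClosure_eq_of_isUpperSet {α : Type*} [PartialOrder α]
    [WellQuasiOrderedLE α] {U : Set α} (hU : IsUpperSet U) :
    ∃ G : Set α, G.Finite ∧ (upperClosure G : Set α) = U := by
  refine ⟨{a | Minimal (· ∈ U) a},
    WellQuasiOrderedLE.finite_of_isAntichain (setOfPred_minimal_antichain _), ?_⟩
  ext a
  constructor
  · rintro ⟨m, hm, hma⟩
    exact hU hma hm.prop
  · intro ha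
    obtain ⟨m, hma, hm⟩ := exists_minimal_le_of_wellFoundedLT (· ∈ U) a ha
    exact ⟨m, hm, hma⟩

theorem Ici_sdiff_upperClosure_insert {α : Type*} [SemilatticeSup α] (g h : α) (G : Set α) :
    Ici g \ upperClosure (insert h G) =
      (Ici g \ upperClosure G) \ (Ici (g ⊔ h) \ upperClosure G) := by
  have hclosure : (upperClosure (insert h G) : Set α) = Ici h ∪ upperClosure G := by
    simp [← singleton_union, upperClosure_union]
  rw [hclosure, ← Ici_inter_Ici]
  grind

section LowerSet

variable {l : ℕ} {κ : Fin l → Type*} [∀ i, Fintype (κ i)]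

theorem stronglyEventuallyPolynomial_hilbertFunction_Ici (g : ∀ i, κ i → ℕ) :
    StronglyEventuallyPolynomial (hilbertFunction (Ici g)) := by
  rw [hilbertFunction_Ici]
  exact (stronglyEventuallyPolynomialSubalgebra l).prod_mem fun i _ =>
    stronglyEventuallyPolynomial_comp_eval (exists_polynomial_eventually_eq_ncard_setOf_ge (g i)) i

theorem stronglyEventuallyPolynomial_hilbertFunction_Ici_sdiff {G : Set (∀ i, κ i → ℕ)}
    (hG : G.Finite) (g : ∀ i, κ i → ℕ) :
    StronglyEventuallyPolynomial (hilbertFunction (Ici g \ upperClosure G)) := by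
  induction G, hG using Set.Finite.induction_on generalizing g with
  | empty => simpa using stronglyEventuallyPolynomial_hilbertFunction_Ici g
  | @insert h G _ _ ih =>
    rw [Ici_sdiff_upperClosure_insert,
      hilbertFunction_sdiff (sdiff_subset_sdiff_left (Ici_subset_Ici.2 le_sup_left))]
    exact (stronglyEventuallyPolynomialSubalgebra l).sub_mem (ih g) (ih (g ⊔ h))

theorem stronglyEventuallyPolynomial_hilbertFunction_of_isLowerSet {S : Set (∀ i, κ i → ℕ)}
    (hS : IsLowerSet S) : StronglyEventuallyPolynomial (hilbertFunction S) := by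
  obtain ⟨G, hG, hGS⟩ := exists_finite_upperClosure_eq_of_isUpperSet hS.compl
  have hSG : S = Ici 0 \ upperClosure G := by
    rw [hGS, ← bot_eq_zero, Ici_bot, ← compl_eq_univ_sdiff, compl_compl]
  rw [hSG]
  exact stronglyEventuallyPolynomial_hilbertFunction_Ici_sdiff hG 0

end LowerSet

section StandardVectors

variable {A D Λ X : Type*} [AddCommMonoid A] [AddMonoid D] [AddCommMonoid Λ] [LinearOrder Λ]
  [AddAction A X]

/-- The exponents `a` that represent the points which `b` adds to the degree-wise images of `B`:
`a +ᵥ b` is not the image of a point of `B` in the same degree, and `a` is the `ord`-least exponent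
of its degree with that value at `b`. These are the analogue of standard monomials. -/
def standardExponents (deg : A →+ D) (ord : A →+ Λ) (B : Set X) (b : X) : Set A :=
  {a | a +ᵥ b ∉ deg ⁻¹' {deg a} +ᵥ B ∧
    ∀ a', deg a' = deg a → a' +ᵥ b = a +ᵥ b → ord a ≤ ord a'}

variable {deg : A →+ D} {ord : A →+ Λ}

theorem isLowerSet_standardExponents [PartialOrder A] [CanonicallyOrderedAdd A]
    [IsOrderedCancelAddMonoid Λ] (B : Set X) (b : X) :
    IsLowerSet (standardExponents deg ord B b) := by
  rintro _ a hle ⟨hnew, hleast⟩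
  obtain ⟨c, rfl⟩ := exists_add_of_le hle
  constructor
  · rintro ⟨a', ha', b', hb', h⟩
    refine hnew ⟨c + a', ?_, b', hb', ?_⟩
    · simpa [add_comm a c] using congrArg (deg c + ·) ha'
    · simpa [add_comm a c, add_vadd] using congrArg (c +ᵥ ·) h
  · intro a' ha' h
    have := hleast (c + a') (by rw [add_comm a c, map_add, map_add, ha'])
      (by rw [add_comm a c, add_vadd, add_vadd, h])
    rw [add_comm a c, map_add, map_add] at this
    exact le_of_add_le_add_left this

theorem injOn_vadd_standardExponents (hord : Function.Injective ord) (B : Set X) (b : X) (n : D) :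
    InjOn (· +ᵥ b) (deg ⁻¹' {n} ∩ standardExponents deg ord B b) := by
  rintro a ⟨rfl, -, ha⟩ a' ⟨hdeg, -, ha'⟩ h
  exact hord (le_antisymm (ha a' hdeg h.symm) (ha' a hdeg.symm h))

theorem vadd_insert_eq_union_standardExponents {n : D} (hfin : (deg ⁻¹' {n}).Finite) (B : Set X)
    (b : X) :
    deg ⁻¹' {n} +ᵥ insert b B =
      (deg ⁻¹' {n} +ᵥ B) ∪ (· +ᵥ b) '' (deg ⁻¹' {n} ∩ standardExponents deg ord B b) := by
  apply Subset.antisymm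
  · rintro _ ⟨a, rfl, x, rfl | hx, rfl⟩
    · by_cases hmem : a +ᵥ x ∈ deg ⁻¹' {deg a} +ᵥ B
      · exact Or.inl hmem
      obtain ⟨a₀, ⟨hdeg, h⟩, hleast⟩ := exists_min_image
        {a' | deg a' = deg a ∧ a' +ᵥ x = a +ᵥ x} ord (hfin.subset fun _ => And.left) ⟨a, rfl, rfl⟩
      refine Or.inr ⟨a₀, ⟨hdeg, ?_, ?_⟩, h⟩
      · rwa [hdeg, h]
      · exact fun a' hdeg' h' => hleast a' ⟨hdeg'.trans hdeg, h'.trans h⟩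
    · exact Or.inl (vadd_mem_vadd rfl hx)
  · apply union_subset (vadd_subset_vadd_left (subset_insert b B))
    rintro _ ⟨a, ⟨ha, -⟩, rfl⟩
    exact vadd_mem_vadd ha (mem_insert b B)

theorem ncard_vadd_insert (hord : Function.Injective ord) {n : D} (hfin : (deg ⁻¹' {n}).Finite)
    {B : Set X} (hB : B.Finite) (b : X) :
    (deg ⁻¹' {n} +ᵥ insert b B).ncard =
      (deg ⁻¹' {n} +ᵥ B).ncard + (deg ⁻¹' {n} ∩ standardExponents deg ord B b).ncard := by
  have hdisj : Disjoint (deg ⁻¹' {n} +ᵥ B)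
      ((· +ᵥ b) '' (deg ⁻¹' {n} ∩ standardExponents deg ord B b)) := by
    rw [Set.disjoint_right]
    rintro _ ⟨a, ⟨rfl, hnew, -⟩, rfl⟩
    exact hnew
  rw [vadd_insert_eq_union_standardExponents (ord := ord) hfin, ncard_union_eq hdisj
    (hfin.vadd hB) ((hfin.inter_of_left _).image _),
    (injOn_vadd_standardExponents hord B b n).ncard_image]

end StandardVectors

/-- The map putting the coordinates of all blocks into one sequence, to compare exponent vectors in
the lexicographic order. -/
def lexHom {ι : Type*} (κ : ι → Type*) : (∀ i, κ i → ℕ) →+ Lex ((Σ i, κ i) → ℕ) where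
  toFun a := toLex fun x => a x.1 x.2
  map_zero' := rfl
  map_add' _ _ := rfl

theorem lexHom_injective {ι : Type*} (κ : ι → Type*) : Function.Injective (lexHom κ) := by
  intro a b h
  ext i j
  exact congrFun (toLex_inj.mp h) ⟨i, j⟩

theorem stronglyEventuallyPolynomial_ncard_multidegree_vadd {l : ℕ} {κ : Fin l → Type*}
    [∀ i, Fintype (κ i)] {X : Type*} [AddAction (∀ i, κ i → ℕ) X] {B : Set X} (hB : B.Finite) :
    StronglyEventuallyPolynomial fun n => ((multidegree κ ⁻¹' {n} +ᵥ B).ncard : ℝ) := by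
  classical
  let : LinearOrder (Σ i, κ i) := linearOrderOfSTO WellOrderingRel
  induction B, hB using Set.Finite.induction_on with
  | empty =>
    simp only [vadd_empty, ncard_empty, Nat.cast_zero]
    exact (stronglyEventuallyPolynomialSubalgebra l).zero_mem
  | @insert b B _ hB ih =>
    simp_rw [ncard_vadd_insert (lexHom_injective κ) (finite_multidegree_preimage_singleton _) hB b,
      Nat.cast_add]
    exact (stronglyEventuallyPolynomialSubalgebra l).add_mem ih
      (stronglyEventuallyPolynomial_hilbertFunction_of_isLowerSet
        (isLowerSet_standardExponents B b))

section PowersOfSets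

theorem image_prod_pow_setOf_sum_eq {M κ : Type*} [CommMonoid M] [Fintype κ] (e : κ → M) (n : ℕ) :
    (fun a : κ → ℕ => ∏ j, e j ^ a j) '' {a | ∑ j, a j = n} = range e ^ n := by
  classical
  apply Subset.antisymm
  · rintro _ ⟨a, rfl, rfl⟩
    rw [← Finset.prod_pow_eq_pow_sum]
    exact finsetProd_mem_finsetProd _ _ _ fun j _ => pow_mem_pow (mem_range_self j)
  · induction n with
    | zero => exact fun m hm => ⟨0, by simp, by simpa using hm.symm⟩
    | succ n ih =>
      rw [pow_succ]
      rintro _ ⟨m, hm, _, ⟨j, rfl⟩, rfl⟩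
      obtain ⟨a, rfl, rfl⟩ := ih hm
      refine ⟨a + Pi.single j 1, ?_, ?_⟩
      · simp [Finset.sum_add_distrib]
      · simp only [Pi.add_apply, pow_add, Finset.prod_mul_distrib]
        simp [Pi.single_apply, pow_ite]

theorem image_prod_prod_pow_multidegree {M ι : Type*} [CommMonoid M] [Fintype ι] {κ : ι → Type*}
    [∀ i, Fintype (κ i)] (e : ∀ i, κ i → M) (n : ι → ℕ) :
    (fun a : ∀ i, κ i → ℕ => ∏ i, ∏ j, e i j ^ a i j) '' (multidegree κ ⁻¹' {n}) =
      ∏ i, range (e i) ^ n i := by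
  simp_rw [← image_prod_pow_setOf_sum_eq]
  ext m
  rw [mem_fintype_prod]
  constructor
  · rintro ⟨a, rfl, rfl⟩
    exact ⟨_, fun i => ⟨a i, rfl, rfl⟩, rfl⟩
  · rintro ⟨_, hg, rfl⟩
    choose a ha hag using hg
    exact ⟨a, funext ha, by simp [← hag]⟩

/-- The multigraded form of Khovanskii's theorem on the growth of iterated sumsets, for actions. -/
theorem stronglyEventuallyPolynomial_ncard_prod_pow_smul {M X : Type*} [CommMonoid M]
    [MulAction M X] {l : ℕ} {T : Fin l → Set M} (hT : ∀ i, (T i).Finite) {B : Set X}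
    (hB : B.Finite) :
    StronglyEventuallyPolynomial fun n => (((∏ i, T i ^ n i) • B).ncard : ℝ) := by
  have (i : Fin l) : Fintype (T i) := (hT i).fintype
  let monomial : (∀ i, T i → ℕ) →+ Additive M :=
    { toFun := fun a => .ofMul (∏ i, ∏ t : T i, (t : M) ^ a i t)
      map_zero' := by simp
      map_add' := fun a b => by simp [pow_add, Finset.prod_mul_distrib] }
  let : AddAction (∀ i, T i → ℕ) X := AddAction.compHom X monomial
  convert stronglyEventuallyPolynomial_ncard_multidegree_vadd (κ := fun i => T i) hB using 4 with n
  have himage := image_prod_prod_pow_multidegree (fun i (t : T i) => (t : M)) n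
  simp only [Subtype.range_coe] at himage
  rw [← himage]
  exact image2_image_left _ _

end PowersOfSets

section CommutingSets

variable {M : Type*} [Monoid M]

theorem mem_pow_iff_exists_list {T : Set M} {n : ℕ} {m : M} :
    m ∈ T ^ n ↔ ∃ L : List M, (L.length = n ∧ ∀ t ∈ L, t ∈ T) ∧ L.prod = m := by
  rw [Set.mem_pow]
  constructor
  · rintro ⟨f, rfl⟩
    exact ⟨_, ⟨List.length_ofFn, List.forall_mem_ofFn_iff.2 fun i => (f i).2⟩, rfl⟩
  · rintro ⟨L, ⟨rfl, hL⟩, rfl⟩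
    exact ⟨fun i => ⟨L[i], hL _ (L.getElem_mem _)⟩, by simp⟩

variable {l : ℕ} {T : Fin l → Set M}

theorem mem_prod_ofFn_pow_iff_exists_lists {n : Fin l → ℕ} {m : M} :
    m ∈ (List.ofFn fun i => T i ^ n i).prod ↔
      ∃ L : Fin l → List M, (∀ i, (L i).length = n i ∧ ∀ t ∈ L i, t ∈ T i) ∧
        (List.ofFn L).flatten.prod = m := by
  simp only [Set.mem_prod_list_ofFn, List.prod_flatten, List.map_ofFn, Function.comp_def]
  constructor
  · rintro ⟨f, rfl⟩
    choose L hL hprod using fun i => mem_pow_iff_exists_list.1 (f i).2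
    exact ⟨L, hL, by simp only [hprod]⟩
  · rintro ⟨L, hL, rfl⟩
    exact ⟨fun i => ⟨(L i).prod, mem_pow_iff_exists_list.2 ⟨L i, hL i, rfl⟩⟩, rfl⟩

open scoped IsMulCommutative in
theorem stronglyEventuallyPolynomial_ncard_prod_ofFn_pow_smul {X : Type*} [MulAction M X]
    (hT : ∀ i, (T i).Finite) (hcomm : ∀ s ∈ ⋃ i, T i, ∀ t ∈ ⋃ i, T i, s * t = t * s) {B : Set X}
    (hB : B.Finite) :
    StronglyEventuallyPolynomial fun n =>
      (((List.ofFn fun i => T i ^ n i).prod • B).ncard : ℝ) := by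
  have := Submonoid.isMulCommutative_closure M hcomm
  set C := Submonoid.closure (⋃ i, T i)
  let S (i : Fin l) : Set C := C.subtype ⁻¹' T i
  have hS (i : Fin l) : C.subtype '' S i = T i :=
    image_preimage_eq_of_subset (by
      simpa using (subset_iUnion T i).trans Submonoid.subset_closure)
  have hprod (n : Fin l → ℕ) :
      (List.ofFn fun i => T i ^ n i).prod = C.subtype '' ∏ i, S i ^ n i := by
    simp only [← List.prod_ofFn, image_list_prod, List.map_ofFn, Function.comp_def, image_pow, hS]
  have hsmul (U : Set C) : (C.subtype '' U) • B = U • B := image2_image_left _ _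
  simp_rw [hprod, hsmul]
  exact stronglyEventuallyPolynomial_ncard_prod_pow_smul
    (fun i => (hT i).preimage C.subtype_injective.injOn) hB

end CommutingSets

theorem foldr_smul_eq_prod_smul {M X : Type*} [Monoid M] [MulAction M X] (L : List M) (x : X) :
    L.foldr (· • ·) x = L.prod • x := by
  induction L with
  | nil => simp
  | cons m L ih => simp [ih, mul_smul]

theorem card_refined_iterated_image_strongly_eventually_polynomial_general
    {X : Type*} {B : Set X} (hB : B.Finite) {l : ℕ} {P : Fin l → Set (X → X)}
    (hP : ∀ i, (P i).Finite) (hcomm : ∀ f ∈ ⋃ i, P i, ∀ g ∈ ⋃ i, P i, f ∘ g = g ∘ f) :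
    StronglyEventuallyPolynomial (fun n : Fin l → ℕ =>
      (Set.ncard {x : X | ∃ L : Fin l → List (X → X),
        (∀ i, (L i).length = n i ∧ ∀ f ∈ L i, f ∈ P i) ∧
        ∃ b ∈ B, x = (List.ofFn L).flatten.foldr (fun f y => f y) b} : ℝ)) := by
  convert stronglyEventuallyPolynomial_ncard_prod_ofFn_pow_smul (M := Function.End X)
    (T := P) hP hcomm hB using 4 with n
  ext x
  rw [Set.mem_smul]
  constructor
  · rintro ⟨L, hL, b, hb, rfl⟩
    exact ⟨_, mem_prod_ofFn_pow_iff_exists_lists.2 ⟨L, hL, rfl⟩, b, hb,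
      (foldr_smul_eq_prod_smul (M := Function.End X) _ b).symm⟩
  · rintro ⟨m, hm, b, hb, rfl⟩
    obtain ⟨L, hL, rfl⟩ := mem_prod_ofFn_pow_iff_exists_lists.1 hm
    exact ⟨L, hL, b, hb, (foldr_smul_eq_prod_smul (M := Function.End X) _ b).symm⟩

/-- Let `B ⊂ X` be a finite subset, `𝓕` a finite family of mutually
commuting mappings `X → X`, and `P = {P₁,…,P_l}` a partition of `𝓕` into nonempty
blocks. The refined iterated image `𝓕^{(n₁,…,n_l)}(B)` (the union of images of `B`
under compositions `f₁∘⋯∘f_l` in which each `fᵢ` is a composition of `nᵢ` functions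
from the block `Pᵢ`, here encoded by tuples of lists) has cardinality which is a
strongly eventually polynomial function of `(n₁,…,n_l)`. -/
theorem card_refined_iterated_image_strongly_eventually_polynomial
    {X : Type*} (B : Set X) (hB : B.Finite)
    (F : Set (X → X)) (hF : F.Finite)
    (hcomm : ∀ f ∈ F, ∀ g ∈ F, f ∘ g = g ∘ f)
    {l : ℕ} (P : Fin l → Set (X → X))
    (hne : ∀ i, (P i).Nonempty)
    (hdisj : ∀ i j, i ≠ j → Disjoint (P i) (P j))
    (hcover : (⋃ i, P i) = F) :
    StronglyEventuallyPolynomial (fun n : Fin l → ℕ =>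
      (Set.ncard {x : X | ∃ L : Fin l → List (X → X),
        (∀ i, (L i).length = n i ∧ ∀ f ∈ L i, f ∈ P i) ∧
        ∃ b ∈ B, x = (List.ofFn L).flatten.foldr (fun f y => f y) b} : ℝ)) := by
  subst hcover
  exact card_refined_iterated_image_strongly_eventually_polynomial_general hB
    (fun i => hF.subset (subset_iUnion P i)) hcomm
end

section
/- Let S be a lower ideal in the poset (ℕ₀^k, ≤) with componentwise ordering. Then there exist a constant N and a polynomial p such that for all integers n ≥ N, the number of elements a = (a₁,…,a_k) ∈ S with a₁+⋯+a_k = n equals p(n). -/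
/-!
By Dickson's lemma the complement of `S` is a finite union of principal upper sets `Ici a`. These
are closed under intersection, since `Ici a ∩ Ici b = Ici (a ⊔ b)`, so inclusion-exclusion reduces
the count to a single `Ici a`. Translating by `a` reduces it further to the whole of `ℕ^k`, where
the slice of degree `n` has `k.multichoose n` elements.
-/

open Filter Polynomial

section UpperClosure

variable {α : Type*}

lemma exists_finite_upperClosure_eq [PartialOrder α] [WellQuasiOrderedLE α] {U : Set α}
    (hU : IsUpperSet U) : ∃ s : Set α, s.Finite ∧ (upperClosure s : Set α) = U := by
  refine ⟨{a | Minimal (· ∈ U) a},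
    WellQuasiOrderedLE.finite_of_isAntichain (setOfPred_minimal_antichain _), ?_⟩
  refine (upperClosure_min (fun a ha => ha.prop) hU).antisymm fun b hb => ?_
  obtain ⟨a, hab, ha⟩ := exists_minimal_le_of_wellFoundedLT (· ∈ U) b hb
  exact ⟨a, ha, hab⟩

lemma coe_upperClosure_insert [Preorder α] (a : α) (s : Set α) :
    (upperClosure (insert a s) : Set α) = Set.Ici a ∪ upperClosure s := by
  rw [Set.insert_eq, upperClosure_union, UpperSet.coe_inf, upperClosure_singleton,
    UpperSet.coe_Ici]

theorem upperClosure_induction_of_union_inter [SemilatticeSup α] {C : Set α → Prop}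
    (empty : C ∅) (principal : ∀ a, C (Set.Ici a))
    (union : ∀ A B, C A → C B → C (A ∩ B) → C (A ∪ B)) {s : Set α} (hs : s.Finite) :
    C (upperClosure s) := by
  -- The union with a new `Ici a` needs the intersection with `Ici a`, hence the stronger claim.
  suffices C (upperClosure s) ∧ ∀ c, C (Set.Ici c ∩ upperClosure s) from this.1
  induction s, hs using Set.Finite.induction_on with
  | empty =>
    rw [upperClosure_empty, UpperSet.coe_top]
    exact ⟨empty, fun c => by rwa [Set.inter_empty]⟩
  | @insert a s _ _ ih =>
    obtain ⟨hs, hs_inter⟩ := ih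
    rw [coe_upperClosure_insert]
    refine ⟨union _ _ (principal a) hs (hs_inter a), fun c => ?_⟩
    rw [Set.inter_union_distrib_left]
    refine union _ _ ?_ (hs_inter c) ?_
    · rw [Set.Ici_inter_Ici]
      exact principal (c ⊔ a)
    · rw [← Set.inter_inter_distrib_left, ← Set.inter_assoc, Set.Ici_inter_Ici]
      exact hs_inter (c ⊔ a)

end UpperClosure

/-- A sequence is eventually polynomial if it agrees with a polynomial function from some index
on, as the Hilbert function of a graded module does with its Hilbert polynomial. -/
def IsEventuallyPolynomial {R : Type*} [Semiring R] (u : ℕ → R) : Prop :=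
  ∃ p : R[X], ∀ᶠ n : ℕ in atTop, u n = p.eval (n : R)

namespace IsEventuallyPolynomial

lemma add {R : Type*} [Semiring R] {u v : ℕ → R} (hu : IsEventuallyPolynomial u)
    (hv : IsEventuallyPolynomial v) : IsEventuallyPolynomial fun n => u n + v n := by
  obtain ⟨p, hp⟩ := hu
  obtain ⟨q, hq⟩ := hv
  refine ⟨p + q, ?_⟩
  filter_upwards [hp, hq] with n hpn hqn
  rw [hpn, hqn, eval_add]

lemma sub {R : Type*} [Ring R] {u v : ℕ → R} (hu : IsEventuallyPolynomial u)
    (hv : IsEventuallyPolynomial v) : IsEventuallyPolynomial fun n => u n - v n := by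
  obtain ⟨p, hp⟩ := hu
  obtain ⟨q, hq⟩ := hv
  refine ⟨p - q, ?_⟩
  filter_upwards [hp, hq] with n hpn hqn
  rw [hpn, hqn, eval_sub]

lemma of_shift {R : Type*} [CommRing R] {u : ℕ → R} {s : ℕ}
    (h : IsEventuallyPolynomial fun n => u (s + n)) : IsEventuallyPolynomial u := by
  obtain ⟨p, hp⟩ := h
  obtain ⟨N, hN⟩ := eventually_atTop.1 hp
  refine ⟨p.comp (X - C (s : R)), eventually_atTop.2 ⟨s + N, fun n hn => ?_⟩⟩
  obtain ⟨m, rfl⟩ := Nat.exists_eq_add_of_le (le_of_add_le_left hn)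
  have hm : u (s + m) = p.eval (m : R) := hN m (Nat.le_of_add_le_add_left hn)
  rw [hm, eval_comp, eval_sub, eval_X, eval_C, Nat.cast_add, add_sub_cancel_left]

end IsEventuallyPolynomial

lemma isEventuallyPolynomial_multichoose (F : Type*) [Field F] [CharZero F] (d : ℕ) :
    IsEventuallyPolynomial fun n => (d.multichoose n : F) := by
  cases d with
  | zero =>
    refine ⟨0, ?_⟩
    filter_upwards [eventually_ne_atTop 0] with n hn
    obtain ⟨m, rfl⟩ := Nat.exists_eq_succ_of_ne_zero hn
    rw [Nat.multichoose_zero_succ, Nat.cast_zero, eval_zero]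
  | succ d =>
    refine ⟨preHilbertPoly F d 0, .of_forall fun n => ?_⟩
    dsimp only
    rw [preHilbertPoly_eq_choose_sub_add F d n.zero_le, Nat.multichoose_eq, Nat.sub_zero,
      Nat.add_right_comm, Nat.add_sub_cancel, Nat.add_comm d, Nat.choose_symm_add]

section Slice

variable {ι : Type*} [Fintype ι]

/-- The slice of degree `n` of a set of exponent vectors: its elements with coordinate sum `n`. -/
def slice (A : Set (ι → ℕ)) (n : ℕ) : Set (ι → ℕ) :=
  {a | a ∈ A ∧ ∑ i, a i = n}

lemma slice_union (A B : Set (ι → ℕ)) (n : ℕ) : slice (A ∪ B) n = slice A n ∪ slice B n :=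
  Set.union_inter_distrib_right A B _

lemma slice_inter (A B : Set (ι → ℕ)) (n : ℕ) : slice (A ∩ B) n = slice A n ∩ slice B n :=
  Set.inter_inter_distrib_right A B _

lemma finite_slice (A : Set (ι → ℕ)) (n : ℕ) : (slice A n).Finite := by
  classical
  refine (Set.finite_Iic fun _ : ι => n).subset ?_
  rintro a ⟨-, rfl⟩ i
  exact Finset.single_le_sum (fun j _ => Nat.zero_le (a j)) (Finset.mem_univ i)

lemma ncard_slice_union_add_ncard_slice_inter (A B : Set (ι → ℕ)) (n : ℕ) :
    (slice (A ∪ B) n).ncard + (slice (A ∩ B) n).ncard = (slice A n).ncard + (slice B n).ncard := by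
  rw [slice_union, slice_inter,
    Set.ncard_union_add_ncard_inter _ _ (finite_slice A n) (finite_slice B n)]

lemma ncard_slice_add_ncard_slice_compl (A : Set (ι → ℕ)) (n : ℕ) :
    (slice A n).ncard + (slice Aᶜ n).ncard = (slice (Set.univ : Set (ι → ℕ)) n).ncard := by
  rw [← Set.union_compl_self A, slice_union, Set.ncard_union_eq _ (finite_slice A n)
    (finite_slice Aᶜ n)]
  exact disjoint_compl_right.mono (fun _ h => h.1) fun _ h => h.1

lemma ncard_slice_univ (n : ℕ) :
    (slice (Set.univ : Set (ι → ℕ)) n).ncard = (Fintype.card ι).multichoose n := by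
  classical
  have hslice : slice (Set.univ : Set (ι → ℕ)) n = {a | ∑ i, a i = n} := Set.univ_inter _
  rw [hslice, ← Nat.card_coe_set_eq, ← Nat.card_eq_fintype_card, ← Sym.natCard_sym_eq_multichoose]
  exact (Nat.card_congr (Sym.equivNatSumOfFintype ι n)).symm

lemma slice_image_const_add (a : ι → ℕ) (A : Set (ι → ℕ)) (n : ℕ) :
    slice ((a + ·) '' A) (∑ i, a i + n) = (a + ·) '' slice A n := by
  ext b
  constructor
  · rintro ⟨⟨c, hc, rfl⟩, hsum⟩
    exact ⟨c, ⟨hc, by simpa [Finset.sum_add_distrib] using hsum⟩, rfl⟩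
  · rintro ⟨c, ⟨hc, rfl⟩, rfl⟩
    exact ⟨⟨c, hc, rfl⟩, Finset.sum_add_distrib⟩

lemma ncard_slice_Ici (a : ι → ℕ) (n : ℕ) :
    (slice (Set.Ici a) (∑ i, a i + n)).ncard = (Fintype.card ι).multichoose n := by
  have hIci : Set.Ici a = (a + ·) '' Set.univ := by
    ext b
    simp [le_iff_exists_add, eq_comm]
  rw [hIci, slice_image_const_add, Set.ncard_image_of_injective _ (add_right_injective a),
    ncard_slice_univ]

variable (F : Type*) [Field F] [CharZero F]

lemma isEventuallyPolynomial_ncard_slice_Ici (a : ι → ℕ) :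
    IsEventuallyPolynomial fun n => ((slice (Set.Ici a) n).ncard : F) := by
  refine .of_shift (s := ∑ i, a i) ?_
  simpa only [ncard_slice_Ici] using isEventuallyPolynomial_multichoose F (Fintype.card ι)

theorem isEventuallyPolynomial_ncard_slice_of_isUpperSet {U : Set (ι → ℕ)} (hU : IsUpperSet U) :
    IsEventuallyPolynomial fun n => ((slice U n).ncard : F) := by
  obtain ⟨s, hs, rfl⟩ := exists_finite_upperClosure_eq hU
  refine upperClosure_induction_of_union_inter
    (C := fun A => IsEventuallyPolynomial fun n => ((slice A n).ncard : F)) ?_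
    (isEventuallyPolynomial_ncard_slice_Ici F) (fun A B hA hB hAB => ?_) hs
  · exact ⟨0, by simp [slice]⟩
  · have hcount (n : ℕ) : ((slice (A ∪ B) n).ncard : F) =
        (slice A n).ncard + (slice B n).ncard - (slice (A ∩ B) n).ncard :=
      eq_sub_of_add_eq (mod_cast ncard_slice_union_add_ncard_slice_inter A B n)
    simpa only [hcount] using (hA.add hB).sub hAB

theorem card_slice_of_lower_ideal_eventually_polynomial_general {S : Set (ι → ℕ)}
    (hS : IsLowerSet S) : IsEventuallyPolynomial fun n => ((slice S n).ncard : F) := by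
  have huniv := isEventuallyPolynomial_ncard_slice_of_isUpperSet F (isUpperSet_univ (α := ι → ℕ))
  have hcompl := isEventuallyPolynomial_ncard_slice_of_isUpperSet F hS.compl
  have hcount (n : ℕ) : ((slice S n).ncard : F) =
      (slice (Set.univ : Set (ι → ℕ)) n).ncard - (slice Sᶜ n).ncard :=
    eq_sub_of_add_eq (mod_cast ncard_slice_add_ncard_slice_compl S n)
  simpa only [hcount] using huniv.sub hcompl

end Slice

/-- Let `S` be a lower ideal in the poset `(ℕ₀^k, ≤)` with
componentwise ordering. Then there exist a constant `N` and a polynomial `p` such that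
for all `n ≥ N`, the number of elements `a = (a₁,…,a_k) ∈ S` with `a₁+⋯+a_k = n`
equals `p(n)`. -/
theorem card_slice_of_lower_ideal_eventually_polynomial
    {k : ℕ} (S : Set (Fin k → ℕ))
    (hS : ∀ a b : Fin k → ℕ, a ≤ b → b ∈ S → a ∈ S) :
    ∃ (N : ℕ) (p : Polynomial ℝ), ∀ n : ℕ, N ≤ n →
      (({a : Fin k → ℕ | a ∈ S ∧ ∑ i, a i = n}.ncard : ℝ)) = p.eval (n : ℝ) := by
  obtain ⟨p, hp⟩ := card_slice_of_lower_ideal_eventually_polynomial_general ℝ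
    (S := S) fun b a hab hb => hS a b hab hb
  obtain ⟨N, hN⟩ := eventually_atTop.1 hp
  exact ⟨N, p, hN⟩
end

section
/- Let (G,+) be a commutative semigroup, A, B ⊂ G two finite subsets, and ψ : G → ℂ an additive character of G. Then there exist polynomials p_a ∈ ℂ[x], indexed by a ∈ A, and a constant N such that for all integers n ≥ N, Σ_{g ∈ n*A+B} ψ(g) = Σ_{a ∈ A} p_a(n) ψ(a)^n. -/
open Pointwise

/-- The `n`-fold sumset `n*A = {a₁+⋯+a_n : aᵢ ∈ A}` of a finite set in a
(commutative) semigroup, defined for `n ≥ 1` (the value at `n = 0` is an irrelevant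
junk value `∅`). -/
def nmulFinset {G : Type*} [Add G] [DecidableEq G] (A : Finset G) : ℕ → Finset G
  | 0 => ∅
  | 1 => A
  | n + 2 => nmulFinset A (n + 1) + A

/-!
Fix a linear order on the pairs `(s, b)`, where `s` is a multiset of elements of `A` and `b ∈ B`,
compatible with adding a multiset to `s`. Every element of `n*A + B` is represented by exactly one
pair `(s, b)` with `|s| = n` which is least among its representations of that degree, and for each
`b` the multisets `s` occurring in such least pairs form a lower set `D`. Since `ψ` is
multiplicative, the character sum is a combination of the sums `c_D(n) = ∑ ∏_{a ∈ s} ψ(a)` over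
`s ∈ D` with `|s| = n`.

If `{a} ∈ D`, sorting the elements of `D` by whether they contain `a` gives
`c_D(n + 1) = c_{D'}(n + 1) + ψ(a) c_{D''}(n)`, where `D' = {s ∈ D | a ∉ s}` is smaller than `D`
and `D'' = {s | {a} + s ∈ D}` is contained in `D`. Hence, with `E` the shift of sequences, either
`E c_D` (if `D'' ≠ D`) or `(E - ψ(a)) c_D` (if `D'' = D`) is expressed through smaller lower sets.
By Dickson's lemma there is no infinite descending chain of lower sets, so by induction `c_D` is
annihilated by a polynomial in `E` whose roots are among `0` and the `ψ(a)`. The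
generalized eigenspace of `E` for the eigenvalue `0` consists of the sequences that eventually
vanish, and that for `c ≠ 0` of the sequences `p(n) c ^ n`.
-/

open Finset Filter Polynomial Module.End
open scoped fwdDiff

section PowTorsion

variable {R M : Type*} [CommRing R] [AddCommGroup M] [Module R M] {f : Module.End R M}
  {P Q : R[X]} {x : M}

/-- The `P`-power torsion of `M` regarded as an `R[X]`-module through `f`: the elements killed by
some power of `P(f)`. -/
noncomputable def powTorsion (f : Module.End R M) (P : R[X]) : Submodule R M :=
  (aeval f P).maxGenEigenspace 0

lemma mem_powTorsion : x ∈ powTorsion f P ↔ ∃ k : ℕ, aeval f (P ^ k) x = 0 := by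
  simp [powTorsion, mem_maxGenEigenspace]

lemma apply_mem_powTorsion (hx : x ∈ powTorsion f P) : f x ∈ powTorsion f P := by
  have hcomm : Commute (aeval f P) f := by simpa using (Commute.all P X).map (aeval f)
  exact mapsTo_maxGenEigenspace_of_comm hcomm 0 hx

lemma mem_powTorsion_of_aeval_mem (hQ : Q ∣ P) (hx : aeval f Q x ∈ powTorsion f P) :
    x ∈ powTorsion f P := by
  obtain ⟨k, hk⟩ := mem_powTorsion.1 hx
  obtain ⟨Q', rfl⟩ := hQ
  refine mem_powTorsion.2 ⟨k + 1, ?_⟩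
  rw [show (Q * Q') ^ (k + 1) = Q' * ((Q * Q') ^ k * Q) by ring, map_mul, map_mul,
    Module.End.mul_apply, Module.End.mul_apply, hk, map_zero]

end PowTorsion

section GeneralizedEigenspaces

variable {K V : Type*} [Field K] [AddCommGroup V] [Module K V] (f : Module.End K V) (S : Finset K)

lemma ker_aeval_prod_X_sub_C_pow_le_iSup_maxGenEigenspace (k : ℕ) :
    LinearMap.ker (aeval f (∏ c ∈ S, (X - C c) ^ k)) ≤ ⨆ c ∈ S, f.maxGenEigenspace c := by
  classical
  induction S using Finset.induction_on with
  | empty => simp [Module.End.one_eq_id]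
  | insert c S hcS ih =>
    have hcop : IsCoprime ((X - C c) ^ k) (∏ d ∈ S, (X - C d) ^ k) :=
      IsCoprime.prod_right fun d hd => IsCoprime.pow <| isCoprime_X_sub_C_of_isUnit_sub <|
        (sub_ne_zero.2 (ne_of_mem_of_not_mem hd hcS).symm).isUnit
    rw [prod_insert hcS, ← sup_ker_aeval_eq_ker_aeval_mul_of_coprime f hcop, Finset.iSup_insert]
    refine sup_le_sup (fun y hy => (mem_maxGenEigenspace f c y).2 ⟨k, ?_⟩) ih
    simpa [Algebra.algebraMap_eq_smul_one] using hy

lemma powTorsion_prod_X_sub_C_le_iSup_maxGenEigenspace :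
    powTorsion f (∏ c ∈ S, (X - C c)) ≤ ⨆ c ∈ S, f.maxGenEigenspace c := by
  intro x hx
  obtain ⟨k, hk⟩ := mem_powTorsion.1 hx
  rw [← prod_pow] at hk
  exact ker_aeval_prod_X_sub_C_pow_le_iSup_maxGenEigenspace f S k hk

end GeneralizedEigenspaces

section SeqShift

/-- The shift operator `s ↦ (n ↦ s (n + 1))` on sequences. -/
def seqShift (R : Type*) [Semiring R] : Module.End R (ℕ → R) := LinearMap.funLeft R R (· + 1)

@[simp]
lemma seqShift_apply {R : Type*} [Semiring R] (s : ℕ → R) (n : ℕ) : seqShift R s n = s (n + 1) :=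
  rfl

lemma seqShift_pow_apply {R : Type*} [Semiring R] (k : ℕ) (s : ℕ → R) (n : ℕ) :
    (seqShift R ^ k) s n = s (n + k) := by
  induction k generalizing n with
  | zero => rfl
  | succ k ih => rw [pow_succ', Module.End.mul_apply, seqShift_apply, ih, add_right_comm, add_assoc]

lemma seqShift_sub_smul_one_pow_apply {R : Type*} [CommRing R] (c : R) (k : ℕ) (t : ℕ → R) :
    ((seqShift R - c • 1) ^ k) (fun n => c ^ n * t n) = fun n => c ^ (n + k) * (Δ_[1])^[k] t n := by
  induction k with
  | zero => rfl
  | succ k ih =>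
    funext n
    simp [pow_succ' (_ - _), ih, Function.iterate_succ_apply', fwdDiff]
    ring

variable {K : Type*} [Field K] [CharZero K]

lemma exists_eval_eq_of_fwdDiff_iter_eq_zero {k : ℕ} {t : ℕ → K} (ht : (Δ_[1])^[k] t = 0) :
    ∃ p : K[X], ∀ n : ℕ, t n = p.eval (n : K) := by
  have hvanish : ∀ j, k ≤ j → (Δ_[1])^[j] t 0 = 0 := by
    intro j hj
    obtain ⟨i, rfl⟩ := Nat.exists_eq_add_of_le' hj
    rw [Function.iterate_add_apply, ht,
      Function.iterate_fixed (x := (0 : ℕ → K)) (fwdDiff_const 1 (0 : K))]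
    rfl
  refine ⟨∑ j ∈ range k, C ((Δ_[1])^[j] t 0 / (j.factorial : K)) * descPochhammer K j, fun n => ?_⟩
  calc t n = ∑ j ∈ range (n + 1), n.choose j • (Δ_[1])^[j] t 0 := by
        simpa using shift_eq_sum_fwdDiff_iter 1 t n 0
    _ = ∑ j ∈ range k, n.choose j • (Δ_[1])^[j] t 0 := by
        refine sum_congr_of_eq_on_inter (fun j _ hj => ?_) (fun j _ hj => ?_) fun _ _ _ => rfl
        · rw [hvanish j (by simpa using hj), smul_zero]
        · rw [Nat.choose_eq_zero_of_lt (by simpa using hj), zero_smul]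
    _ = _ := by
        rw [eval_finsetSum]
        refine sum_congr rfl fun j _ => ?_
        rw [nsmul_eq_mul, Nat.cast_choose_eq_descPochhammer_div, eval_mul, eval_C]
        ring

lemma eventually_eq_zero_of_mem_maxGenEigenspace_seqShift_zero {R : Type*} [CommRing R]
    {s : ℕ → R} (hs : s ∈ (seqShift R).maxGenEigenspace 0) : ∀ᶠ n in atTop, s n = 0 := by
  obtain ⟨k, hk⟩ := (mem_maxGenEigenspace _ _ _).1 hs
  filter_upwards [eventually_ge_atTop k] with n hn
  rw [zero_smul, sub_zero] at hk
  simpa [seqShift_pow_apply, hn] using congrFun hk (n - k)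

lemma exists_eq_eval_mul_pow_of_mem_maxGenEigenspace_seqShift {c : K} (hc : c ≠ 0) {s : ℕ → K}
    (hs : s ∈ (seqShift K).maxGenEigenspace c) :
    ∃ p : K[X], ∀ n : ℕ, s n = p.eval (n : K) * c ^ n := by
  obtain ⟨k, hk⟩ := (mem_maxGenEigenspace _ _ _).1 hs
  obtain ⟨t, rfl⟩ : ∃ t : ℕ → K, s = fun n => c ^ n * t n :=
    ⟨fun n => s n / c ^ n, funext fun n => by field_simp⟩
  rw [seqShift_sub_smul_one_pow_apply] at hk
  have ht : (Δ_[1])^[k] t = 0 := funext fun n => by simpa [hc] using congrFun hk n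
  obtain ⟨p, hp⟩ := exists_eval_eq_of_fwdDiff_iter_eq_zero ht
  exact ⟨p, fun n => by simp only [hp, mul_comm]⟩

end SeqShift

section ExpPoly

/-- The sequences which eventually agree with an exponential polynomial
`n ↦ ∑ i ∈ A, p i (n) * z i ^ n`. -/
def expPoly {R ι : Type*} [CommSemiring R] (A : Finset ι) (z : ι → R) : Submodule R (ℕ → R) where
  carrier := {s | ∃ p : ι → R[X], ∀ᶠ n : ℕ in atTop, s n = ∑ i ∈ A, (p i).eval (n : R) * z i ^ n}
  zero_mem' := ⟨0, by simp⟩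
  add_mem' := by
    rintro s t ⟨p, hp⟩ ⟨q, hq⟩
    refine ⟨p + q, ?_⟩
    filter_upwards [hp, hq] with n hs ht
    simp [hs, ht, add_mul, sum_add_distrib]
  smul_mem' := by
    rintro c s ⟨p, hp⟩
    refine ⟨c • p, ?_⟩
    filter_upwards [hp] with n hs
    simp [hs, mul_sum, mul_assoc]

variable {K ι : Type*} [Field K] [CharZero K]

lemma powTorsion_seqShift_le_expPoly [DecidableEq K] (A : Finset ι) (z : ι → K) :
    powTorsion (seqShift K) (∏ c ∈ insert 0 (A.image z), (X - C c)) ≤ expPoly A z := by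
  classical
  refine (powTorsion_prod_X_sub_C_le_iSup_maxGenEigenspace _ _).trans (iSup₂_le fun c hc s hs => ?_)
  by_cases hc0 : c = 0
  · subst hc0
    exact ⟨0, by simpa using eventually_eq_zero_of_mem_maxGenEigenspace_seqShift_zero hs⟩
  · obtain ⟨i, hi, rfl⟩ := mem_image.1 ((mem_insert.1 hc).resolve_left hc0)
    obtain ⟨p, hp⟩ := exists_eq_eval_mul_pow_of_mem_maxGenEigenspace_seqShift hc0 hs
    refine ⟨Pi.single i p, .of_forall fun n => ?_⟩
    rw [hp, sum_eq_single_of_mem i hi fun j _ hj => by simp [hj], Pi.single_eq_same]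

end ExpPoly

section LowerSet

instance wellFoundedLT_lowerSet {α : Type*} [Preorder α] [WellQuasiOrderedLE α] :
    WellFoundedLT (LowerSet α) := by
  refine ⟨wellFounded_iff_isEmpty_descending_chain.2 ⟨fun ⟨D, hD⟩ => ?_⟩⟩
  have hanti : Antitone D := antitone_nat_of_succ_le fun n => (hD n).le
  choose x hx hx' using fun n => Set.not_subset.1 (hD n).not_ge
  obtain ⟨i, j, hij, hle⟩ := wellQuasiOrdered_le x
  exact hx' i ((D (i + 1)).lower hle (hanti hij (hx j)))

instance wellQuasiOrderedLE_multiset {σ : Type*} [Finite σ] : WellQuasiOrderedLE (Multiset σ) := by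
  classical
  refine ⟨fun s => ?_⟩
  obtain ⟨i, j, hij, h⟩ := wellQuasiOrdered_le fun n => (s n).toFinsupp
  exact ⟨i, j, hij, Finsupp.orderIsoMultiset.symm.le_iff_le.1 h⟩

variable {σ : Type*}

/-- The elements of a lower set of multisets that do not contain `a`. -/
def avoiding (D : LowerSet (Multiset σ)) (a : σ) : LowerSet (Multiset σ) where
  carrier := {s | s ∈ D ∧ a ∉ s}
  lower' _ _ hts hs := ⟨D.lower hts hs.1, fun ha => hs.2 (Multiset.mem_of_le hts ha)⟩

/-- The multisets which lie in `D` after adding `a`; the analogue of the colon ideal `(I : X_a)`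
for the complement `D` of a monomial ideal `I`. -/
def colon (D : LowerSet (Multiset σ)) (a : σ) : LowerSet (Multiset σ) where
  carrier := {s | a ::ₘ s ∈ D}
  lower' _ _ hts hs := D.lower (Multiset.cons_le_cons a hts) hs

lemma mem_avoiding {D : LowerSet (Multiset σ)} {a : σ} {s : Multiset σ} :
    s ∈ avoiding D a ↔ s ∈ D ∧ a ∉ s := Iff.rfl

lemma mem_colon {D : LowerSet (Multiset σ)} {a : σ} {s : Multiset σ} :
    s ∈ colon D a ↔ a ::ₘ s ∈ D := Iff.rfl

lemma avoiding_lt {D : LowerSet (Multiset σ)} {a : σ} (ha : {a} ∈ D) : avoiding D a < D :=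
  lt_of_le_of_ne (fun _ hs => hs.1) fun h =>
    (mem_avoiding.1 (h.symm ▸ ha : {a} ∈ avoiding D a)).2 (Multiset.mem_singleton_self a)

lemma colon_le (D : LowerSet (Multiset σ)) (a : σ) : colon D a ≤ D :=
  fun s hs => D.lower (Multiset.le_cons_self s a) hs

variable {R : Type*} [CommSemiring R] [Fintype σ] [DecidableEq σ]

/-- The weighted count `∑ ∏_{i ∈ s} z i` of the multisets `s ∈ D` of cardinality `n`. -/
noncomputable def weightSum (z : σ → R) (D : LowerSet (Multiset σ)) (n : ℕ) : R :=
  ∑ s : Sym σ n, (D : Set (Multiset σ)).indicator (fun t => (t.map z).prod) s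

lemma weightSum_succ (z : σ → R) (D : LowerSet (Multiset σ)) (a : σ) (n : ℕ) :
    weightSum z D (n + 1) =
      weightSum z (avoiding D a) (n + 1) + z a * weightSum z (colon D a) n := by
  classical
  have hcolon : z a * weightSum z (colon D a) n = ∑ s : Sym σ (n + 1),
      if a ∈ s then (D : Set (Multiset σ)).indicator (fun t => (t.map z).prod) s else 0 := by
    rw [weightSum, mul_sum]
    refine Fintype.sum_of_injective (Sym.cons a) (fun s t => (Sym.cons_inj_right a s t).1) _ _
      (fun s hs => if_neg fun ha => hs ((Sym.exists_cons_of_mem ha).imp fun _ => Eq.symm))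
      fun s => ?_
    simp [Set.indicator_apply, mem_colon, Sym.coe_cons]
  rw [hcolon, weightSum, weightSum, ← sum_add_distrib]
  refine sum_congr rfl fun s _ => ?_
  by_cases ha : a ∈ s <;> simp [Set.indicator_apply, mem_avoiding, ha]

lemma weightSum_succ_eq_zero (z : σ → R) {D : LowerSet (Multiset σ)} (hD : ∀ a, {a} ∉ D) (n : ℕ) :
    weightSum z D (n + 1) = 0 := by
  refine sum_eq_zero fun s _ => Set.indicator_of_notMem (fun hs => ?_) _
  obtain ⟨a, ha⟩ := s.exists_mem
  exact hD a (D.lower (Multiset.singleton_le.2 ha) hs)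

lemma weightSum_mem_powTorsion {R : Type*} [CommRing R] {z : σ → R} {S : Finset R}
    (h0 : 0 ∈ S) (hz : ∀ i, z i ∈ S) (D : LowerSet (Multiset σ)) :
    weightSum z D ∈ powTorsion (seqShift R) (∏ c ∈ S, (X - C c)) := by
  have mem_of_sub {c : R} (hc : c ∈ S) {s : ℕ → R}
      (hs : seqShift R s - c • s ∈ powTorsion (seqShift R) (∏ c ∈ S, (X - C c))) :
      s ∈ powTorsion (seqShift R) (∏ c ∈ S, (X - C c)) :=
    mem_powTorsion_of_aeval_mem (dvd_prod_of_mem _ hc)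
      (by simpa [Algebra.algebraMap_eq_smul_one] using hs)
  induction D using WellFoundedLT.induction with
  | ind D ih =>
  by_cases hD : ∃ a, {a} ∈ D
  · obtain ⟨a, ha⟩ := hD
    have hrec : seqShift R (weightSum z D)
        = seqShift R (weightSum z (avoiding D a)) + z a • weightSum z (colon D a) :=
      funext (weightSum_succ z D a)
    have havoid := apply_mem_powTorsion (ih _ (avoiding_lt ha))
    rcases (colon_le D a).lt_or_eq with hlt | heq
    · refine mem_of_sub h0 ?_
      rw [zero_smul, sub_zero, hrec]
      exact add_mem havoid (Submodule.smul_mem _ _ (ih _ hlt))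
    · refine mem_of_sub (hz a) ?_
      rwa [hrec, heq, add_sub_cancel_right]
  · refine mem_of_sub h0 ?_
    have hzero : seqShift R (weightSum z D) = 0 :=
      funext (weightSum_succ_eq_zero z (not_exists.1 hD))
    rw [hzero, zero_smul, sub_zero]
    exact zero_mem _

end LowerSet

section StandardWords

variable {σ τ α : Type*} (op : σ → α → α) [LeftCommutative op] (b : τ → α)

/-- The point reached from `b j` by applying the commuting maps `op i`, `i ∈ s`. -/
def wordPoint (s : Multiset σ) (j : τ) : α := s.foldr op (b j)

lemma wordPoint_sym_zero (s : Sym σ 0) (j : τ) : wordPoint op b s j = b j := by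
  rw [s.eq_nil_of_card_zero, Sym.coe_nil, wordPoint, Multiset.foldr_zero]

lemma wordPoint_cons (i : σ) (s : Multiset σ) (j : τ) :
    wordPoint op b (i ::ₘ s) j = op i (wordPoint op b s j) := Multiset.foldr_cons ..

lemma exists_sym_succ_wordPoint_eq_iff {n : ℕ} {x : α} :
    (∃ (s : Sym σ (n + 1)) (j : τ), wordPoint op b s j = x) ↔
      ∃ (i : σ) (s : Sym σ n) (j : τ), op i (wordPoint op b s j) = x := by
  constructor
  · rintro ⟨s, j, rfl⟩
    obtain ⟨i, s, rfl⟩ := s.exists_eq_cons_of_succ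
    exact ⟨i, s, j, (wordPoint_cons ..).symm⟩
  · rintro ⟨i, s, j, rfl⟩
    exact ⟨i ::ₛ s, j, wordPoint_cons ..⟩

variable {op b} in
lemma wordPoint_add_congr {s s' : Multiset σ} {j j' : τ}
    (h : wordPoint op b s j = wordPoint op b s' j') (u : Multiset σ) :
    wordPoint op b (u + s) j = wordPoint op b (u + s') j' := by
  simp only [wordPoint, Multiset.foldr_add] at h ⊢
  rw [h]

variable {op} in
lemma apply_wordPoint {R : Type*} [CommMonoid R] {w : α → R} {z : σ → R}
    (hw : ∀ i x, w (op i x) = z i * w x) (s : Multiset σ) (j : τ) :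
    w (wordPoint op b s j) = w (b j) * (s.map z).prod := by
  induction s using Multiset.induction_on with
  | empty => simp [wordPoint]
  | cons i s ih =>
    rw [wordPoint_cons, hw, ih, Multiset.map_cons, Multiset.prod_cons, mul_left_comm]

/-- The sort key on pairs `(s, j)`: lexicographic comparison of the multiplicities in `s`, ties
being broken by `j`. -/
noncomputable def wordKey [DecidableEq σ] (s : Multiset σ) (j : τ) : Lex (σ →₀ ℕ) ×ₗ τ :=
  toLex (toLex s.toFinsupp, j)

lemma wordKey_inj [DecidableEq σ] {s s' : Multiset σ} {j j' : τ} :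
    wordKey s j = wordKey s' j' ↔ s = s' ∧ j = j' := by
  simp [wordKey]

variable [LinearOrder σ] [LinearOrder τ]

lemma wordKey_add_le_wordKey_add_iff {s s' : Multiset σ} {j j' : τ} (u : Multiset σ) :
    wordKey (u + s) j ≤ wordKey (u + s') j' ↔ wordKey s j ≤ wordKey s' j' := by
  simp [wordKey, Prod.Lex.toLex_le_toLex]

/-- The multisets `s` for which `(s, j)` has the least key among the pairs with the same
cardinality reaching the same point; the analogue of the standard monomials of a Gröbner basis. -/
def standardWords (j : τ) : LowerSet (Multiset σ) where
  carrier := {s | ∀ (s' : Multiset σ) (j' : τ), s'.card = s.card →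
    wordPoint op b s' j' = wordPoint op b s j → wordKey s j ≤ wordKey s' j'}
  lower' := by
    intro t s hst ht s' j' hcard hpoint
    obtain ⟨u, rfl⟩ := Multiset.le_iff_exists_add.1 hst
    rw [add_comm s u] at ht
    exact (wordKey_add_le_wordKey_add_iff u).1 <|
      ht (u + s') j' (by simp [hcard]) (wordPoint_add_congr hpoint u)

variable {op b}

lemma eq_of_mem_standardWords {s s' : Multiset σ} {j j' : τ} (hs : s ∈ standardWords op b j)
    (hs' : s' ∈ standardWords op b j') (hcard : s.card = s'.card)
    (h : wordPoint op b s j = wordPoint op b s' j') : s = s' ∧ j = j' :=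
  wordKey_inj.1 <| le_antisymm (hs s' j' hcard.symm h.symm) (hs' s j hcard h)

lemma exists_mem_standardWords_wordPoint_eq [Finite σ] [Finite τ] {n : ℕ}
    (s : Sym σ n) (j : τ) :
    ∃ (s' : Sym σ n) (j' : τ), (s' : Multiset σ) ∈ standardWords op b j' ∧
      wordPoint op b s' j' = wordPoint op b s j := by
  obtain ⟨⟨s', j'⟩, hmem, hmin⟩ := Set.exists_min_image
    {p : Sym σ n × τ | wordPoint op b p.1 p.2 = wordPoint op b s j}
    (fun p => wordKey (p.1 : Multiset σ) p.2) (Set.toFinite _) ⟨(s, j), rfl⟩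
  exact ⟨s', j', fun t k hcard h => hmin (⟨t, hcard.trans s'.card_coe⟩, k) (h.trans hmem), hmem⟩

lemma sum_eq_sum_mul_weightSum_standardWords [Fintype σ] [Fintype τ] {R : Type*}
    [CommSemiring R] {w : α → R} {z : σ → R}
    (hw : ∀ i x, w (op i x) = z i * w x) {n : ℕ} {T : Finset α}
    (hT : ∀ x, x ∈ T ↔ ∃ (s : Sym σ n) (j : τ), wordPoint op b s j = x) :
    ∑ x ∈ T, w x = ∑ j, w (b j) * weightSum z (standardWords op b j) n := by
  classical
  calc ∑ x ∈ T, w x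
      = ∑ p : Sym σ n × τ with (p.1 : Multiset σ) ∈ standardWords op b p.2,
          w (wordPoint op b p.1 p.2) := by
        symm
        refine sum_nbij (fun p : Sym σ n × τ => wordPoint op b p.1 p.2) ?_ ?_ ?_ fun _ _ => rfl
        · exact fun p _ => (hT _).2 ⟨p.1, p.2, rfl⟩
        · intro p hp q hq h
          obtain ⟨hs, hj⟩ := eq_of_mem_standardWords (by simpa using hp) (by simpa using hq)
            (p.1.card_coe.trans q.1.card_coe.symm) h
          exact Prod.ext (Sym.coe_injective hs) hj
        · intro x hx
          obtain ⟨s, j, rfl⟩ := (hT x).1 hx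
          obtain ⟨s', j', hmem, h⟩ :=
            exists_mem_standardWords_wordPoint_eq (op := op) (b := b) s j
          exact ⟨(s', j'), by simpa using hmem, h⟩
    _ = ∑ j, w (b j) * weightSum z (standardWords op b j) n := by
        rw [sum_filter, Fintype.sum_prod_type_right]
        simp only [weightSum, mul_sum, Set.indicator_apply, SetLike.mem_coe, mul_ite, mul_zero,
          apply_wordPoint b hw]

end StandardWords

theorem exists_mem_powTorsion_sum_eq {σ τ α R : Type*} [Finite σ] [Finite τ] [CommRing R]
    (op : σ → α → α) [LeftCommutative op] (b : τ → α) {w : α → R} {z : σ → R}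
    (hw : ∀ i x, w (op i x) = z i * w x) {S : Finset R} (h0 : 0 ∈ S) (hz : ∀ i, z i ∈ S) :
    ∃ s ∈ powTorsion (seqShift R) (∏ c ∈ S, (X - C c)), ∀ (n : ℕ) (T : Finset α),
      (∀ x, x ∈ T ↔ ∃ (u : Sym σ n) (j : τ), wordPoint op b u j = x) → ∑ x ∈ T, w x = s n := by
  classical
  have := Fintype.ofFinite σ
  have := Fintype.ofFinite τ
  let := IsWellOrder.linearOrder (WellOrderingRel : σ → σ → Prop)
  let := IsWellOrder.linearOrder (WellOrderingRel : τ → τ → Prop)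
  refine ⟨∑ j, w (b j) • weightSum z (standardWords op b j),
    sum_mem fun j _ => Submodule.smul_mem _ _ (weightSum_mem_powTorsion h0 hz _), fun n T hT => ?_⟩
  simpa using sum_eq_sum_mul_weightSum_standardWords hw hT

section Sumset

variable {G : Type*} [AddCommSemigroup G] [DecidableEq G]

instance leftCommutative_coe_add (A : Finset G) :
    LeftCommutative fun (a : A) (x : G) => (a : G) + x :=
  ⟨fun a b x => add_left_comm (a : G) b x⟩

lemma nmulFinset_add_two_add (A B : Finset G) (n : ℕ) :
    nmulFinset A (n + 2) + B = A + (nmulFinset A (n + 1) + B) := by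
  rw [nmulFinset, add_comm _ A, add_assoc]

lemma mem_nmulFinset_succ_add_iff {A B : Finset G} {n : ℕ} {g : G} :
    g ∈ nmulFinset A (n + 1) + B ↔ ∃ (s : Sym A (n + 1)) (b : B),
      wordPoint (fun (a : A) (x : G) => (a : G) + x) Subtype.val (s : Multiset A) b = g := by
  induction n generalizing g with
  | zero =>
    rw [exists_sym_succ_wordPoint_eq_iff, zero_add, nmulFinset, Finset.mem_add]
    simp [wordPoint_sym_zero]
  | succ n ih =>
    rw [exists_sym_succ_wordPoint_eq_iff, nmulFinset_add_two_add, Finset.mem_add]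
    simp [ih]

end Sumset

theorem character_sum_over_affine_sumset_general
    {K : Type*} [Field K] [CharZero K] {G : Type*} [AddCommSemigroup G] [DecidableEq G]
    (A B : Finset G) (ψ : G → K) (hψ : ∀ a b : G, ψ (a + b) = ψ a * ψ b) :
    ∃ (p : G → K[X]) (N : ℕ), ∀ n : ℕ, N ≤ n →
      ∑ g ∈ nmulFinset A n + B, ψ g = ∑ a ∈ A, (p a).eval (n : K) * ψ a ^ n := by
  classical
  obtain ⟨s, hs, hsum⟩ := exists_mem_powTorsion_sum_eq (fun (a : A) (x : G) => (a : G) + x)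
    (Subtype.val : B → G) (w := ψ) (z := fun a => ψ a)
    (fun a x => hψ a x) (mem_insert_self 0 (A.image ψ))
    (fun a => mem_insert_of_mem (mem_image_of_mem ψ a.2))
  obtain ⟨p, hp⟩ := powTorsion_seqShift_le_expPoly A ψ hs
  obtain ⟨N, hN⟩ := eventually_atTop.1 (hp.and (eventually_ge_atTop 1))
  refine ⟨p, N, fun n hn => ?_⟩
  obtain ⟨heq, hpos⟩ := hN n hn
  obtain ⟨m, rfl⟩ := Nat.exists_eq_add_of_le' hpos
  rw [← heq, hsum _ _ fun g => mem_nmulFinset_succ_add_iff]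

/-- Khovanskiĭ. Let `(G,+)` be a commutative semigroup, `A, B ⊂ G`
two finite subsets, and `ψ : G → ℂ` an additive character of `G`. Then there exist
polynomials `p_a ∈ ℂ[x]`, indexed by `a ∈ A`, and a constant `N` such that for all
integers `n ≥ N`, `Σ_{g ∈ n*A+B} ψ(g) = Σ_{a ∈ A} p_a(n) ψ(a)^n`. -/
theorem character_sum_over_affine_sumset
    {G : Type*} [AddCommSemigroup G] [DecidableEq G] (A B : Finset G)
    (ψ : G → ℂ) (hψ : ∀ a b : G, ψ (a + b) = ψ a * ψ b) :
    ∃ (p : G → Polynomial ℂ) (N : ℕ), ∀ n : ℕ, N ≤ n →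
      ∑ g ∈ nmulFinset A n + B, ψ g = ∑ a ∈ A, (p a).eval (n : ℂ) * ψ a ^ n :=
  character_sum_over_affine_sumset_general A B ψ hψ
end
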